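/- Let λ ∈ (0, 1/3] or λ = 1/2. Let f : ℝ → ℝ be C² with f'(0) ≥ 0, with f'' globally Lipschitz, and with |f''| uniformly bounded on ℝ. Let u₀ : [0,∞) → ℝ be locally absolutely continuous with u₀(0) = 0, u₀'(0) = 0, and ∫_K |u₀'(x)|^{1/λ} dx < ∞ for every compact K ⊂ [0,∞). Then there exists a weak solution u : [0,∞) × [0,∞) → ℝ of equation (E1) with these data (u continuous, u(0,t) = 0, u(x,0) = u₀(x), and ∫₀^∞ ∫₀^∞ { −u_x (φ_t + f'(u) φ_x) + (λ−1) f''(u) (u_x)² φ } dx dt = 0 for all compactly supported C¹ test functions φ on (0,∞)×(0,∞)) which in addition is locally Hölder continuous with exponent 1−λ jointly in (x,t): for every compact set K ⊂ [0,∞) × [0,∞) there is a constant C such that |u(x₁,t₁) − u(x₂,t₂)| ≤ C (|x₁−x₂| + |t₁−t₂|)^{1−λ} for all (x₁,t₁), (x₂,t₂) ∈ K. -/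

import Mathlib

/-!
The solution is built by characteristics in Lagrangian coordinates and continued conservatively
through the times at which `u_x` blows up. Put `p = 1/λ ≥ 2`. Along a characteristic `X' = f'(u)`
the equation makes `1/u_x` grow at the rate `λ f''(u)`, so one looks for labels `ξ` with
`X_ξ = |q|^p`, `U_ξ = c |q|^{p-2} q`, `q = q₀ + c a` and `a(ξ,t) = λ ∫₀ᵗ f''(U(ξ,s)) ds`; then
`u_x = c/q`, and `q` simply changes sign at blow-up. The system is a Volterra equation for `a`,
whose right-hand side is a contraction in a weighted supremum norm.

The initial label is the energy `x + ∫₀ˣ |u₀'|^p`, for which `|q₀|, |c| ≤ 1`. Since `|u₀'|^p` is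
only locally integrable, the original material might be compressed into a bounded interval at a
positive time. To exclude this, every unit cell of labels also receives a piece of singular
material (`q₀ = 0`, `c = 1`), invisible at `t = 0`, whose length at time `t` is `∫ |a|^p`. As `a`
is Lipschitz in `ξ`, the original material of a cell cannot be compressed without the singular
material expanding, so the characteristics always cover the whole line.

The map `X(·,t)` pushes `|q|^p dξ` forward to Lebesgue measure, so Eulerian integrals become label
integrals, and the integrand of the weak formulation becomes `-∂ₜ (U_ξ φ(X,t))`, whose integral
vanishes. For `p = 2` the term `f''(u) u_x²` requires that, unless `c f''(U) = 0`, the stretch `q`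
vanishes only on a null set of times; this holds because its zeros are then isolated. Hölder
continuity follows from `|U_ξ| ≤ X_ξ^{1-λ}` together with the Lipschitz dependence of `U` and `X`
on time.
-/

open Real Set MeasureTheory

/-- Partial derivative in the spatial direction `x` (first coordinate). -/
noncomputable def px (φ : ℝ × ℝ → ℝ) (p : ℝ × ℝ) : ℝ := fderiv ℝ φ p (1, 0)

/-- Partial derivative in the time direction `t` (second coordinate). -/
noncomputable def pt (φ : ℝ × ℝ → ℝ) (p : ℝ × ℝ) : ℝ := fderiv ℝ φ p (0, 1)

namespace HunterSaxton

open Filter Topology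
open scoped NNReal BoundedContinuousFunction

/-! ### The odd power -/

/-- The odd power `q ↦ |q|^{p-2} q`, a multiple of the derivative of `|q|^p`. -/
noncomputable def oddPow (p q : ℝ) : ℝ := |q| ^ (p - 2) * q

section OddPow

variable {p : ℝ} (hp : 2 ≤ p)
include hp

lemma hasDerivAt_oddPow (q : ℝ) : HasDerivAt (oddPow p) ((p - 1) * |q| ^ (p - 2)) q := by
  rcases eq_or_ne q 0 with rfl | hq
  · have hslope : ∀ x ≠ 0, |x| ^ (p - 2) = slope (oddPow p) 0 x := fun x hx => by
      simp [slope, oddPow, mul_comm, hx]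
    have hlim : Tendsto (fun x : ℝ => |x| ^ (p - 2)) (𝓝 0) (𝓝 (|0| ^ (p - 2))) :=
      (continuous_abs.rpow_const fun _ => Or.inr (by linarith)).tendsto 0
    have hzero : (p - 1) * |(0 : ℝ)| ^ (p - 2) = |0| ^ (p - 2) := by
      rcases hp.eq_or_lt with rfl | hp'
      · norm_num
      · simp [zero_rpow (sub_pos.2 hp').ne']
    rw [hzero, hasDerivAt_iff_tendsto_slope]
    exact (hlim.mono_left nhdsWithin_le_nhds).congr' (eventually_nhdsWithin_of_forall hslope)
  · have hq' : |q| ≠ 0 := abs_ne_zero.2 hq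
    refine (((hasDerivAt_abs hq).rpow_const (p := p - 2) (Or.inl hq')).mul
      (hasDerivAt_id q)).congr_deriv ?_
    calc _ = (p - 2) * (|q| ^ (p - 2) / |q|) * (q * SignType.sign q) + |q| ^ (p - 2) := by
          rw [rpow_sub_one hq', id]; ring
      _ = _ := by rw [self_mul_sign]; field_simp; ring

lemma continuous_oddPow : Continuous (oddPow p) :=
  continuous_iff_continuousAt.2 fun q => (hasDerivAt_oddPow hp q).continuousAt

lemma oddPow_mul_self (q : ℝ) : oddPow p q * q = |q| ^ p := by
  rw [oddPow, mul_assoc, ← sq, ← sq_abs, ← rpow_natCast,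
    ← rpow_add_of_nonneg (abs_nonneg q) (by linarith) (by norm_num)]
  norm_num

lemma abs_oddPow (q : ℝ) : |oddPow p q| = |q| ^ (p - 1) := by
  rw [oddPow, abs_mul, abs_of_nonneg (by positivity : 0 ≤ |q| ^ (p - 2))]
  nth_rw 2 [← rpow_one |q|]
  rw [← rpow_add_of_nonneg (abs_nonneg q) (by linarith) zero_le_one]
  ring_nf

lemma abs_oddPow_sub_le {q r R : ℝ} (hq : |q| ≤ R) (hr : |r| ≤ R) :
    |oddPow p q - oddPow p r| ≤ (p - 1) * R ^ (p - 2) * |q - r| := by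
  refine (convex_Icc (-R) R).norm_image_sub_le_of_norm_hasDerivWithin_le
    (fun x _ => (hasDerivAt_oddPow hp x).hasDerivWithinAt) (fun x hx => ?_)
    (abs_le.1 hr) (abs_le.1 hq)
  rw [norm_eq_abs, abs_of_nonneg (mul_nonneg (by linarith) (by positivity))]
  exact mul_le_mul_of_nonneg_left
    (rpow_le_rpow (abs_nonneg x) (abs_le.2 hx) (by linarith)) (by linarith)

lemma continuous_abs_rpow : Continuous fun q : ℝ => |q| ^ p :=
  continuous_abs.rpow_const fun _ => Or.inr (by linarith)

end OddPow

/-! ### Integrals on intervals -/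

lemma abs_integral_le_rpow_mul_rpow {h ρ : ℝ → ℝ} {θ a b : ℝ} (hθ0 : 0 < θ) (hθ1 : θ < 1)
    (hab : a ≤ b) (hρ0 : ∀ x, 0 ≤ ρ x) (hρ : IntervalIntegrable ρ volume a b)
    (hle : ∀ x, |h x| ≤ ρ x ^ θ) :
    |∫ x in a..b, h x| ≤ (∫ x in a..b, ρ x) ^ θ * (b - a) ^ (1 - θ) := by
  have hconj : θ⁻¹.HolderConjugate (1 - θ)⁻¹ := (Real.holderConjugate_iff).2
    ⟨(one_lt_inv₀ hθ0).2 hθ1, by simp⟩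
  have hpow : ∀ x, (ρ x ^ θ) ^ θ⁻¹ = ρ x := fun x => rpow_rpow_inv (hρ0 x) hθ0.ne'
  set μ : Measure ℝ := volume.restrict (Ioc a b)
  have hρμ : Integrable ρ μ := (intervalIntegrable_iff_integrableOn_Ioc_of_le hab).1 hρ
  have hmem : MemLp (fun x => ρ x ^ θ) (ENNReal.ofReal θ⁻¹) μ := by
    refine (integrable_norm_rpow_iff ?_ (by simpa using hθ0) (by simp)).1 ?_
    · exact (hρμ.aemeasurable.pow_const θ).aestronglyMeasurable
    · simpa [ENNReal.toReal_ofReal (inv_nonneg.2 hθ0.le), abs_rpow_of_nonneg (hρ0 _),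
        abs_of_nonneg (hρ0 _), hpow] using hρμ
  have hint : IntervalIntegrable (fun x => ρ x ^ θ) volume a b :=
    (intervalIntegrable_iff_integrableOn_Ioc_of_le hab).2
      (hmem.integrable (by simpa using (one_lt_inv₀ hθ0).2 hθ1 |>.le))
  have hholder := integral_mul_le_Lp_mul_Lq_of_nonneg hconj (μ := μ) (g := fun _ => 1)
    (ae_of_all _ fun x => rpow_nonneg (hρ0 x) θ) (ae_of_all _ fun _ => zero_le_one)
    hmem (memLp_const 1)
  simp only [mul_one, hpow, one_rpow, integral_const, one_div, inv_inv, smul_eq_mul,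
    measureReal_def, μ, Measure.restrict_apply_univ, volume_Ioc,
    ENNReal.toReal_ofReal (sub_nonneg.2 hab)] at hholder
  rw [intervalIntegral.integral_of_le hab (f := ρ)]
  refine (intervalIntegral.norm_integral_le_of_norm_le (f := h) hab
    (ae_of_all _ fun x _ => hle x) hint).trans ?_
  rwa [intervalIntegral.integral_of_le hab]

lemma abs_integral_exp_mul_abs_le {κ : ℝ} (hκ : 0 < κ) (x : ℝ) :
    |∫ s in (0 : ℝ)..x, exp (κ * |s|)| ≤ exp (κ * |x|) / κ := by
  have key : ∀ y : ℝ, 0 ≤ y → |∫ s in (0 : ℝ)..y, exp (κ * |s|)| ≤ exp (κ * y) / κ := by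
    intro y hy
    have habs : ∫ s in (0 : ℝ)..y, exp (κ * |s|) = ∫ s in (0 : ℝ)..y, exp (κ * s) :=
      intervalIntegral.integral_congr fun s hs => by
        rw [uIcc_of_le hy] at hs; simp only [abs_of_nonneg hs.1]
    rw [abs_of_nonneg (intervalIntegral.integral_nonneg hy fun _ _ => (exp_pos _).le), habs,
      intervalIntegral.integral_comp_mul_left _ hκ.ne', integral_exp, smul_eq_mul, mul_zero,
      exp_zero, div_eq_inv_mul]
    gcongr
    linarith
  rcases le_total 0 x with hx | hx
  · simpa [abs_of_nonneg hx] using key x hx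
  · have hneg : ∫ s in (0 : ℝ)..x, exp (κ * |s|) = -∫ s in (0 : ℝ)..(-x), exp (κ * |s|) := by
      rw [← intervalIntegral.integral_symm]
      simpa using intervalIntegral.integral_comp_neg (a := 0) (b := x) fun s => exp (κ * |s|)
    rw [hneg, abs_neg, abs_of_nonpos hx]
    exact key _ (neg_nonneg.2 hx)

lemma continuous_integral_of_abs_le {h : ℝ → ℝ → ℝ} {R : ℝ → ℝ}
    (hmeas : ∀ t, Measurable fun η => h η t) (hcont : ∀ η, Continuous (h η)) (hR : Continuous R)
    (hle : ∀ η t, |h η t| ≤ R t) :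
    Continuous fun z : ℝ × ℝ => ∫ η in (0 : ℝ)..z.1, h η z.2 := by
  suffices hswap : Continuous fun z : ℝ × ℝ => ∫ η in (0 : ℝ)..z.2, h η z.1 from
    hswap.comp continuous_swap
  refine continuous_iff_continuousAt.2 fun ⟨t, ξ⟩ => ?_
  have hnear : ∀ᶠ s in 𝓝 t, R s < R t + 1 := hR.continuousAt.eventually_lt_const (by linarith)
  refine intervalIntegral.continuousAt_parametric_primitive_of_dominated
    (F := fun s η => h η s) (fun _ => R t + 1) (min ξ 0 - 1) (max ξ 0 + 1)
    (fun s => (hmeas s).aestronglyMeasurable)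
    (hnear.mono fun s hs => ae_of_all _ fun η => (hle η s).trans hs.le) intervalIntegrable_const
    (ae_of_all _ fun η => (hcont η).continuousAt) ⟨?_, ?_⟩ ⟨?_, ?_⟩ (by simp)
  all_goals linarith [min_le_left ξ 0, min_le_right ξ 0, le_max_left ξ 0, le_max_right ξ 0]

/-! ### A contraction principle in weighted spaces -/

/-- The continuous maps bounded pointwise by the envelope `m`. -/
def envelope {α : Type*} (E : Type*) [TopologicalSpace α] [NormedAddCommGroup E] (m : α → ℝ) :
    Set (α → E) :=
  {A | Continuous A ∧ ∀ z, ‖A z‖ ≤ m z}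

/-- The Banach fixed point theorem for the bounded continuous functions `A / w`. -/
lemma exists_fixedPoint_mem_envelope {α E : Type*} [TopologicalSpace α] [NormedAddCommGroup E]
    [NormedSpace ℝ E] [CompleteSpace E] {w m : α → ℝ} {C : ℝ} {K : ℝ≥0} (hw : Continuous w)
    (hw0 : ∀ z, 0 < w z) (hm0 : ∀ z, 0 ≤ m z) (hmw : ∀ z, m z ≤ C * w z) (hK : K < 1)
    {T : (α → E) → α → E} (hT : MapsTo T (envelope E m) (envelope E m))
    (hlip : ∀ A ∈ envelope E m, ∀ A' ∈ envelope E m, ∀ D, (∀ z, ‖A z - A' z‖ ≤ D * w z) →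
      ∀ z, ‖T A z - T A' z‖ ≤ K * D * w z) :
    ∃ A ∈ envelope E m, T A = A := by
  let V : Set (α →ᵇ E) := {b | ∀ z, ‖w z • b z‖ ≤ m z}
  have hVclosed : IsClosed V := by
    simp only [V, ofPred_forall]
    refine isClosed_iInter fun z => isClosed_le ?_ continuous_const
    exact (continuous_eval_const z).const_smul (w z) |>.norm
  have : CompleteSpace V := hVclosed.completeSpace_coe
  have : Nonempty V := ⟨⟨0, fun z => by simpa using hm0 z⟩⟩
  have hmul : ∀ b : V, (fun z => w z • b.1 z) ∈ envelope E m := fun b =>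
    ⟨hw.smul b.1.continuous, b.2⟩
  have hbdd : ∀ A ∈ envelope E m, ∀ z, ‖(w z)⁻¹ • A z‖ ≤ C := fun A hA z => by
    rw [norm_smul, norm_inv, norm_of_nonneg (hw0 z).le, inv_mul_le_iff₀ (hw0 z), mul_comm]
    exact (hA.2 z).trans (hmw z)
  let div (A : envelope E m) : α →ᵇ E := BoundedContinuousFunction.ofNormedAddCommGroup
    (fun z => (w z)⁻¹ • A.1 z) ((hw.inv₀ fun z => (hw0 z).ne').smul A.2.1) C (hbdd A.1 A.2)
  have mul_div : ∀ A z, w z • div A z = A.1 z := fun A z => smul_inv_smul₀ (hw0 z).ne' _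
  let image (b : V) : envelope E m := ⟨_, hT (hmul b)⟩
  let Φ (b : V) : V := ⟨div (image b), fun z => by rw [mul_div]; exact (image b).2.2 z⟩
  have hΦ : ContractingWith K Φ := by
    refine ⟨hK, LipschitzWith.of_dist_le_mul fun b b' =>
      (BoundedContinuousFunction.dist_le (by positivity)).2 fun z => ?_⟩
    have hdist : ∀ z, ‖w z • b.1 z - w z • b'.1 z‖ ≤ dist b b' * w z := fun z => by
      rw [← smul_sub, norm_smul, norm_of_nonneg (hw0 z).le, ← dist_eq_norm, mul_comm]
      exact mul_le_mul_of_nonneg_right (BoundedContinuousFunction.dist_coe_le_dist z) (hw0 z).le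
    have himage : ‖(image b).1 z - (image b').1 z‖ ≤ K * dist b b' * w z :=
      hlip _ (hmul b) _ (hmul b') _ hdist z
    rw [← mul_div, ← mul_div, ← smul_sub, norm_smul, norm_of_nonneg (hw0 z).le, mul_comm]
      at himage
    rw [dist_eq_norm]
    exact le_of_mul_le_mul_right himage (hw0 z)
  obtain ⟨b, hb⟩ : ∃ b, Φ b = b := ⟨_, hΦ.fixedPoint_isFixedPt⟩
  refine ⟨_, hmul b, funext fun z => ?_⟩
  calc _ = w z • (Φ b).1 z := (mul_div (image b) z).symm
    _ = w z • b.1 z := by rw [hb]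

/-! ### Generalized inverses of monotone functions -/

/-- The left-continuous generalized inverse of a monotone function tending to `±∞`. -/
noncomputable def lowerInverse (X : ℝ → ℝ) (y : ℝ) : ℝ := sInf {ξ | y ≤ X ξ}

section LowerInverse

variable {X : ℝ → ℝ} (hX : Continuous X) (hmono : Monotone X) (htop : Tendsto X atTop atTop)
  (hbot : Tendsto X atBot atBot)
include hX hmono htop hbot

lemma le_iff_lowerInverse_le (y ξ : ℝ) : y ≤ X ξ ↔ lowerInverse X y ≤ ξ := by
  have hne : {ξ | y ≤ X ξ}.Nonempty := (htop.eventually_ge_atTop y).exists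
  have hbdd : BddBelow {ξ | y ≤ X ξ} := by
    obtain ⟨ξ₀, hξ₀⟩ := (hbot.eventually_lt_atBot y).exists
    exact ⟨ξ₀, fun ξ hξ => (hmono.reflect_lt (hξ₀.trans_le hξ)).le⟩
  have hmem : y ≤ X (lowerInverse X y) :=
    (isClosed_le continuous_const hX).csInf_mem hne hbdd
  exact ⟨fun h => csInf_le hbdd h, fun h => hmem.trans (hmono h)⟩

lemma apply_lowerInverse (y : ℝ) : X (lowerInverse X y) = y := by
  have hgc := le_iff_lowerInverse_le hX hmono htop hbot
  obtain ⟨ξ, rfl⟩ : y ∈ range X := hX.surjective htop hbot y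
  exact le_antisymm (hmono ((hgc _ ξ).1 le_rfl)) ((hgc _ _).2 le_rfl)

end LowerInverse

/-! ### Transport of densities -/

/-- The map `X` pushes the measure `ρ μ` forward to `ν`, so that integrals against `ν` can be
computed in the coordinates of the source. -/
structure TransportsDensity {α β : Type*} [MeasurableSpace α] [MeasurableSpace β] (ρ : α → ℝ)
    (X : α → β) (μ : Measure α) (ν : Measure β) : Prop where
  measurable_density : Measurable ρ
  density_nonneg : ∀ ξ, 0 ≤ ρ ξ
  measurable_map : Measurable X
  map_eq : (μ.withDensity fun ξ => ENNReal.ofReal (ρ ξ)).map X = ν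

namespace TransportsDensity

variable {α β : Type*} [MeasurableSpace α] [MeasurableSpace β] {ρ : α → ℝ} {X : α → β}
  {μ : Measure α} {ν : Measure β}

lemma integrable_iff (h : TransportsDensity ρ X μ ν) {g : β → ℝ} (hg : Measurable g) :
    Integrable g ν ↔ Integrable (fun ξ => ρ ξ * g (X ξ)) μ := by
  rw [← h.map_eq, integrable_map_measure hg.aestronglyMeasurable h.measurable_map.aemeasurable,
    integrable_withDensity_iff_integrable_smul' h.measurable_density.ennreal_ofReal (by simp)]
  simp [ENNReal.toReal_ofReal (h.density_nonneg _)]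

lemma integral_eq (h : TransportsDensity ρ X μ ν) {g : β → ℝ} (hg : Measurable g) :
    ∫ y, g y ∂ν = ∫ ξ, ρ ξ * g (X ξ) ∂μ := by
  rw [← h.map_eq, integral_map h.measurable_map.aemeasurable hg.aestronglyMeasurable,
    integral_withDensity_eq_integral_toReal_smul h.measurable_density.ennreal_ofReal (by simp)]
  simp [ENNReal.toReal_ofReal (h.density_nonneg _)]

lemma restrict (h : TransportsDensity ρ X μ ν) {s : Set β} (hs : MeasurableSet s) :
    TransportsDensity ρ X (μ.restrict (X ⁻¹' s)) (ν.restrict s) where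
  measurable_density := h.measurable_density
  density_nonneg := h.density_nonneg
  measurable_map := h.measurable_map
  map_eq := by
    rw [← restrict_withDensity (h.measurable_map hs), ← h.map_eq,
      Measure.restrict_map h.measurable_map hs]

lemma ae_of_ae (h : TransportsDensity ρ X μ ν) {P : β → Prop} (hP : ∀ᵐ y ∂ν, P y) :
    ∀ᵐ ξ ∂μ, ρ ξ ≠ 0 → P (X ξ) := by
  rw [← h.map_eq] at hP
  have := (ae_withDensity_iff h.measurable_density.ennreal_ofReal).1
    (ae_of_ae_map h.measurable_map.aemeasurable hP)
  filter_upwards [this] with ξ hξ hρ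
  exact hξ (by simpa using (h.density_nonneg ξ).lt_of_ne' hρ)

lemma prod {γ : Type*} [MeasurableSpace γ] {τ : Measure γ} [SigmaFinite μ] [SigmaFinite ν]
    [SigmaFinite τ] {ρ : α × γ → ℝ} {X : α × γ → β} (hρ : Measurable ρ) (hX : Measurable X)
    (h : ∀ t, TransportsDensity (fun ξ => ρ (ξ, t)) (fun ξ => X (ξ, t)) μ ν) :
    TransportsDensity ρ (fun z => (X z, z.2)) (μ.prod τ) (ν.prod τ) where
  measurable_density := hρ
  density_nonneg z := (h z.2).density_nonneg z.1
  measurable_map := hX.prodMk measurable_snd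
  map_eq := by
    symm
    refine Measure.prod_eq fun s b hs hb => ?_
    have hslice : ∀ t, ∫⁻ ξ in (fun ξ => X (ξ, t)) ⁻¹' s, ENNReal.ofReal (ρ (ξ, t)) ∂μ = ν s :=
        fun t => by
      rw [← withDensity_apply _ ((h t).measurable_map hs), ← (h t).map_eq,
        Measure.map_apply (h t).measurable_map hs]
    have hpre : MeasurableSet ((fun z => (X z, z.2)) ⁻¹' s ×ˢ b) :=
      (hX.prodMk measurable_snd) (hs.prod hb)
    rw [Measure.map_apply (hX.prodMk measurable_snd) (hs.prod hb), withDensity_apply _ hpre,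
      ← lintegral_indicator hpre, lintegral_prod_symm' _ (hρ.ennreal_ofReal.indicator hpre)]
    calc _ = ∫⁻ t, b.indicator (fun _ => ν s) t ∂τ := lintegral_congr fun t => by
          by_cases ht : t ∈ b
          · rw [indicator_of_mem ht, ← hslice t, ← lintegral_indicator ((h t).measurable_map hs)]
            refine lintegral_congr fun ξ => ?_
            by_cases hξ : X (ξ, t) ∈ s <;> simp [indicator, ht, hξ]
          · simp [indicator, ht]
      _ = ν s * τ b := by rw [lintegral_indicator hb, setLIntegral_const]

end TransportsDensity

section Primitive

variable {ρ X : ℝ → ℝ}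

lemma transportsDensity_of_sub_eq_integral (hρ : Measurable ρ) (hρ0 : ∀ ξ, 0 ≤ ρ ξ)
    (hint : ∀ a b, IntervalIntegrable ρ volume a b)
    (hsub : ∀ a b, X b - X a = ∫ ξ in a..b, ρ ξ)
    (hX : Continuous X) (htop : Tendsto X atTop atTop) (hbot : Tendsto X atBot atBot) :
    TransportsDensity ρ X volume volume := by
  have hmono : Monotone X := fun a b hab => sub_nonneg.1 <| by
    rw [hsub]; exact intervalIntegral.integral_nonneg hab fun ξ _ => hρ0 ξ
  have hgc := le_iff_lowerInverse_le hX hmono htop hbot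
  have hinv := apply_lowerInverse hX hmono htop hbot
  refine ⟨hρ, hρ0, hX.measurable, (Measure.ext_of_Ico volume _ fun a b hab => ?_).symm⟩
  set a' := lowerInverse X a
  set b' := lowerInverse X b
  have hab' : a' ≤ b' := (hgc a b').1 (hab.le.trans_eq (hinv b).symm)
  have hpre : X ⁻¹' Ico a b = Ico a' b' := by
    ext ξ; simp [hgc, ← not_le, a', b']
  rw [Measure.map_apply hX.measurable measurableSet_Ico, hpre,
    withDensity_apply _ measurableSet_Ico, volume_Ico,
    ← ofReal_integral_eq_lintegral_ofReal
      ((intervalIntegrable_iff_integrableOn_Ico_of_le hab').1 (hint a' b')) (ae_of_all _ hρ0),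
    integral_Ico_eq_integral_Ioc, ← intervalIntegral.integral_of_le hab', ← hsub, hinv, hinv]

/-- The labels that are not recovered from their position lie in the flat pieces of `X`; there are
countably many of these, and each is mapped to a point. -/
lemma ae_lowerInverse_apply (h : TransportsDensity ρ X volume volume) (hX : Continuous X)
    (hmono : Monotone X) (htop : Tendsto X atTop atTop) (hbot : Tendsto X atBot atBot) :
    ∀ᵐ ξ, ρ ξ ≠ 0 → lowerInverse X (X ξ) = ξ := by
  have hgc := le_iff_lowerInverse_le hX hmono htop hbot
  have hflat : ∀ᵐ y : ℝ, y ∉ range fun r : ℚ => X r := (countable_range _).ae_notMem _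
  filter_upwards [h.ae_of_ae hflat] with ξ hξ hρ
  by_contra hne
  have hlt : lowerInverse X (X ξ) < ξ := ((hgc _ _).1 le_rfl).lt_of_ne hne
  obtain ⟨r, hr, hrξ⟩ := exists_rat_btwn hlt
  exact hξ hρ ⟨r, le_antisymm (hmono hrξ.le) ((hgc _ _).2 hr.le)⟩

end Primitive

/-! ### Initial labels -/

lemma lipschitzWith_one_of_abs_sub_le_sub {h : ℝ → ℝ} (hh : ∀ x y, x ≤ y → |h y - h x| ≤ y - x) :
    LipschitzWith 1 h := by
  refine LipschitzWith.of_le_add fun x y => ?_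
  rw [dist_eq]
  rcases le_total x y with hxy | hxy
  · linarith [(abs_le.1 (hh x y hxy)).1, neg_abs_le (x - y)]
  · linarith [(abs_le.1 (hh y x hxy)).2, le_abs_self (x - y)]

section Profile

/-- The initial stretch `q₀ = (A')^{1/p}` of labels that are laid out at the positions `A`. -/
noncomputable def initialStretch (p : ℝ) (A : ℝ → ℝ) (ξ : ℝ) : ℝ := deriv A ξ ^ p⁻¹

open Classical in
/-- The amplitude `c` of labels laid out at the positions `A` and carrying the values `B`, that is
the solution of `B' = c |q₀|^{p-2} q₀`. Material without initial length (`A' = 0`) gets the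
amplitude `1`, so that it expands at later times. -/
noncomputable def initialAmplitude (p : ℝ) (A B : ℝ → ℝ) (ξ : ℝ) : ℝ :=
  if deriv A ξ = 0 then 1 else deriv B ξ / deriv A ξ ^ (1 - p⁻¹)

variable {p : ℝ} {A B : ℝ → ℝ}

lemma measurable_initialStretch : Measurable (initialStretch p A) :=
  (measurable_deriv A).pow_const _

lemma measurable_initialAmplitude : Measurable (initialAmplitude p A B) :=
  Measurable.ite (measurable_deriv A (measurableSet_singleton 0)) measurable_const
    ((measurable_deriv B).div ((measurable_deriv A).pow_const _))

lemma abs_initialStretch_rpow (hp : p ≠ 0) (hA : Monotone A) (ξ : ℝ) :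
    |initialStretch p A ξ| ^ p = deriv A ξ := by
  rw [initialStretch, abs_of_nonneg (rpow_nonneg hA.deriv_nonneg _),
    rpow_inv_rpow hA.deriv_nonneg hp]

lemma abs_initialStretch_le_one (hp : 0 < p) (hA : Monotone A) (hA1 : LipschitzWith 1 A) (ξ : ℝ) :
    |initialStretch p A ξ| ≤ 1 := by
  rw [initialStretch, abs_of_nonneg (rpow_nonneg hA.deriv_nonneg _)]
  exact rpow_le_one hA.deriv_nonneg
    ((le_abs_self _).trans (norm_deriv_le_of_lipschitz hA1)) (inv_nonneg.2 hp.le)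

lemma integral_abs_initialStretch_rpow (hp : p ≠ 0) (hA : Monotone A) (hA1 : LipschitzWith 1 A)
    (a b : ℝ) : ∫ η in a..b, |initialStretch p A η| ^ p = A b - A a := by
  simp only [abs_initialStretch_rpow hp hA]
  exact hA1.lipschitzOnWith.absolutelyContinuousOnInterval.integral_deriv_eq_sub

section Amplitude

variable (hp : 1 < p) (hA : Monotone A)
  (hB : ∀ x y, x ≤ y → |B y - B x| ≤ (y - x) ^ p⁻¹ * (A y - A x) ^ (1 - p⁻¹))
include hp hA hB

lemma lipschitzWith_of_abs_sub_le_rpow (hA1 : LipschitzWith 1 A) : LipschitzWith 1 B := by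
  have hp0 : 0 ≤ 1 - p⁻¹ := sub_nonneg.2 (inv_le_one_of_one_le₀ hp.le)
  refine lipschitzWith_one_of_abs_sub_le_sub fun x y hxy => ?_
  have hAxy : A y - A x ≤ y - x := by
    simpa [dist_eq, abs_of_nonneg, hA hxy, hxy] using hA1.dist_le_mul y x
  calc |B y - B x| ≤ (y - x) ^ p⁻¹ * (A y - A x) ^ (1 - p⁻¹) := hB x y hxy
    _ ≤ (y - x) ^ p⁻¹ * (y - x) ^ (1 - p⁻¹) :=
      mul_le_mul_of_nonneg_left (rpow_le_rpow (sub_nonneg.2 (hA hxy)) hAxy hp0)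
        (rpow_nonneg (sub_nonneg.2 hxy) _)
    _ = y - x := by
      rw [← rpow_add' (sub_nonneg.2 hxy) (by simp), add_sub_cancel, rpow_one]

lemma abs_deriv_le_deriv_rpow {ξ : ℝ} (hξ : DifferentiableAt ℝ A ξ) :
    |deriv B ξ| ≤ deriv A ξ ^ (1 - p⁻¹) := by
  have hp0 : 0 ≤ 1 - p⁻¹ := sub_nonneg.2 (inv_le_one_of_one_le₀ hp.le)
  by_cases hBξ : DifferentiableAt ℝ B ξ
  swap
  · rw [deriv_zero_of_not_differentiableAt hBξ, abs_zero]
    exact rpow_nonneg hA.deriv_nonneg _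
  have hA' := hξ.hasDerivAt.tendsto_slope.mono_left (nhdsGT_le_nhdsNE ξ)
  have hB' := hBξ.hasDerivAt.tendsto_slope.mono_left (nhdsGT_le_nhdsNE ξ)
  refine le_of_tendsto_of_tendsto hB'.abs (hA'.rpow_const (Or.inr hp0)) ?_
  filter_upwards [self_mem_nhdsWithin] with y (hy : ξ < y)
  have hpos : 0 < y - ξ := sub_pos.2 hy
  have hsplit : (y - ξ) ^ p⁻¹ * (y - ξ) ^ (1 - p⁻¹) = y - ξ := by
    rw [← rpow_add hpos, add_sub_cancel, rpow_one]
  rw [slope_def_field, slope_def_field, abs_div, abs_of_pos hpos, div_le_iff₀ hpos,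
    div_rpow (sub_nonneg.2 (hA hy.le)) hpos.le]
  calc |B y - B ξ| ≤ (y - ξ) ^ p⁻¹ * (A y - A ξ) ^ (1 - p⁻¹) := hB ξ y hy.le
    _ = (A y - A ξ) ^ (1 - p⁻¹) / (y - ξ) ^ (1 - p⁻¹) *
        ((y - ξ) ^ p⁻¹ * (y - ξ) ^ (1 - p⁻¹)) := by
      field_simp
    _ = _ := by rw [hsplit]

lemma abs_initialAmplitude_le_one (ξ : ℝ) : |initialAmplitude p A B ξ| ≤ 1 := by
  unfold initialAmplitude
  split_ifs with h
  · simp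
  · have hpos : 0 < deriv A ξ ^ (1 - p⁻¹) := rpow_pos_of_pos (hA.deriv_nonneg.lt_of_ne' h) _
    rw [abs_div, abs_of_pos hpos, div_le_one hpos]
    exact abs_deriv_le_deriv_rpow hp hA hB (differentiableAt_of_deriv_ne_zero h)

lemma initialAmplitude_mul_oddPow {ξ : ℝ} (hξ : DifferentiableAt ℝ A ξ) :
    initialAmplitude p A B ξ * oddPow p (initialStretch p A ξ) = deriv B ξ := by
  have hp0 : p ≠ 0 := by linarith
  have hp1 : 0 < 1 - p⁻¹ := sub_pos.2 (inv_lt_one_of_one_lt₀ hp)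
  by_cases h : deriv A ξ = 0
  · have hB0 := abs_deriv_le_deriv_rpow hp hA hB hξ
    rw [h, zero_rpow hp1.ne'] at hB0
    rw [abs_nonpos_iff.1 hB0, oddPow, initialStretch, h, zero_rpow (inv_ne_zero hp0)]
    simp
  · have hpos : 0 < deriv A ξ := hA.deriv_nonneg.lt_of_ne' h
    have hq : 0 < initialStretch p A ξ := rpow_pos_of_pos hpos _
    have hodd : oddPow p (initialStretch p A ξ) = deriv A ξ ^ (1 - p⁻¹) := by
      rw [oddPow, abs_of_pos hq, ← rpow_add_one hq.ne', initialStretch, ← rpow_mul hpos.le]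
      congr 1
      field_simp
      ring
    rw [hodd, initialAmplitude, if_neg h, div_mul_cancel₀ _ (rpow_pos_of_pos hpos _).ne']

lemma integral_initialAmplitude_mul_oddPow (hA1 : LipschitzWith 1 A) (a b : ℝ) :
    ∫ η in a..b, initialAmplitude p A B η * oddPow p (initialStretch p A η) = B b - B a := by
  have hB1 := lipschitzWith_of_abs_sub_le_rpow hp hA hB hA1
  rw [← hB1.lipschitzOnWith.absolutelyContinuousOnInterval.integral_deriv_eq_sub]
  refine intervalIntegral.integral_congr_ae ?_
  filter_upwards [hA1.ae_differentiableAt_real] with ξ hξ _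
  exact initialAmplitude_mul_oddPow hp hA hB hξ

end Amplitude

end Profile

section Energy

/-- The energy coordinate `x + ∫₀ˣ |g|^p` of the datum `∫₀ˣ g`. -/
noncomputable def energy (p : ℝ) (g : ℝ → ℝ) (x : ℝ) : ℝ := x + ∫ y in (0 : ℝ)..x, |g y| ^ p

variable {p : ℝ} {g : ℝ → ℝ}

lemma energy_of_nonpos (hp : p ≠ 0) (hg0 : ∀ x ≤ 0, g x = 0) {x : ℝ} (hx : x ≤ 0) :
    energy p g x = x := by
  have hzero : ∫ y in (0 : ℝ)..x, |g y| ^ p = ∫ y in (0 : ℝ)..x, 0 :=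
    intervalIntegral.integral_congr fun y hy => by
      rw [uIcc_of_ge hx] at hy
      simp [hg0 y hy.2, zero_rpow hp]
  rw [energy, hzero, intervalIntegral.integral_zero, add_zero]

variable (hgp : ∀ a b, IntervalIntegrable (fun x => |g x| ^ p) volume a b)
include hgp

lemma energy_sub (a b : ℝ) : energy p g b - energy p g a = b - a + ∫ y in a..b, |g y| ^ p := by
  rw [energy, energy, ← intervalIntegral.integral_interval_sub_left (hgp 0 b) (hgp 0 a)]
  ring

lemma sub_le_energy_sub {a b : ℝ} (hab : a ≤ b) : b - a ≤ energy p g b - energy p g a := by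
  rw [energy_sub hgp]
  exact le_add_of_nonneg_right
    (intervalIntegral.integral_nonneg hab fun _ _ => rpow_nonneg (abs_nonneg _) _)

lemma strictMono_energy : StrictMono (energy p g) := fun _ _ hab => by
  linarith [sub_le_energy_sub hgp hab.le]

lemma surjective_energy : Function.Surjective (energy p g) := by
  have h0 : energy p g 0 = 0 := by simp [energy]
  refine (continuous_id.add (intervalIntegral.continuous_primitive hgp 0)).surjective ?_ ?_
  · refine tendsto_atTop_mono' _ ?_ tendsto_id
    filter_upwards [eventually_ge_atTop 0] with x hx
    have h := sub_le_energy_sub hgp hx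
    rwa [h0, sub_zero, sub_zero] at h
  · refine tendsto_atBot_mono' _ ?_ tendsto_id
    filter_upwards [eventually_le_atBot 0] with x hx
    have h := sub_le_energy_sub hgp hx
    rwa [h0, zero_sub, zero_sub, neg_le_neg_iff] at h

lemma abs_integral_le_energy_sub_rpow (hp : 1 < p) {a b : ℝ} (hab : a ≤ b) :
    |∫ y in a..b, g y| ≤ (energy p g b - energy p g a) ^ p⁻¹ * (b - a) ^ (1 - p⁻¹) := by
  have hp0 : 0 < p := by linarith
  refine (abs_integral_le_rpow_mul_rpow (inv_pos.2 hp0) (inv_lt_one_of_one_lt₀ hp) hab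
    (fun x => rpow_nonneg (abs_nonneg (g x)) p) (hgp a b)
    fun x => (rpow_rpow_inv (abs_nonneg _) hp0.ne').ge).trans ?_
  have hnonneg : 0 ≤ ∫ y in a..b, |g y| ^ p :=
    intervalIntegral.integral_nonneg hab fun _ _ => rpow_nonneg (abs_nonneg _) _
  rw [energy_sub hgp]
  gcongr
  linarith

end Energy

section Slowdown

/-- The length of the original material in the `m`-th unit cell of labels; these lengths have a
divergent sum, but their squares are summable. -/
noncomputable def fillLength (m : ℕ) : ℝ := 1 / (2 * (m + 1))

lemma fillLength_pos (m : ℕ) : 0 < fillLength m := by unfold fillLength; positivity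

lemma fillLength_le_half (m : ℕ) : fillLength m ≤ 1 / 2 := by
  unfold fillLength
  gcongr
  linarith [(Nat.cast_nonneg m : (0 : ℝ) ≤ m)]

lemma tendsto_sum_fillLength :
    Tendsto (fun n => ∑ m ∈ Finset.range n, fillLength m) atTop atTop := by
  have heq : ∀ n, ∑ m ∈ Finset.range n, fillLength m =
      1 / 2 * ∑ m ∈ Finset.range n, 1 / ((m : ℝ) + 1) := fun n => by
    rw [Finset.mul_sum]
    exact Finset.sum_congr rfl fun m _ => by unfold fillLength; field_simp
  simp only [heq]
  exact tendsto_sum_range_one_div_nat_succ_atTop.const_mul_atTop (by norm_num)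

lemma summable_fillLength_sq : Summable fun m => fillLength m ^ 2 := by
  have h := ((summable_nat_add_iff 1).2 (summable_one_div_nat_pow.2 one_lt_two)).mul_left (1 / 4)
  refine h.congr fun m => ?_
  unfold fillLength
  push_cast
  field_simp
  norm_num

/-- The labels that carry original material: all negative ones, and in the cell `[m, m + 1)` those
below `m + fillLength m`. -/
def originalLabels : Set ℝ := {ξ | ξ < ⌊ξ⌋₊ + fillLength ⌊ξ⌋₊}

/-- The coordinate that grows at unit speed on the original labels and rests elsewhere. -/
noncomputable def slowdown (ξ : ℝ) : ℝ := ∫ η in (0 : ℝ)..ξ, originalLabels.indicator (1 : ℝ → ℝ) η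

lemma measurableSet_originalLabels : MeasurableSet originalLabels := by
  have hend : Measurable fun ξ : ℝ => (⌊ξ⌋₊ : ℝ) + fillLength ⌊ξ⌋₊ :=
    (measurable_from_top (f := fun m : ℕ => (m : ℝ) + fillLength m)).comp Nat.measurable_floor
  exact measurableSet_lt measurable_id hend

lemma mem_originalLabels_of_neg {ξ : ℝ} (hξ : ξ < 0) : ξ ∈ originalLabels := by
  have h0 : ⌊ξ⌋₊ = 0 := Nat.floor_of_nonpos hξ.le
  rw [originalLabels, mem_ofPred_eq, h0, Nat.cast_zero, zero_add]
  exact hξ.trans (fillLength_pos 0)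

lemma mem_originalLabels_iff {m : ℕ} {ξ : ℝ} (hξ : ξ ∈ Ico (m : ℝ) (m + 1)) :
    ξ ∈ originalLabels ↔ ξ < m + fillLength m := by
  rw [originalLabels, mem_ofPred_eq, (Nat.floor_eq_iff ((Nat.cast_nonneg m).trans hξ.1)).2 hξ]

lemma intervalIntegrable_originalLabels (a b : ℝ) :
    IntervalIntegrable (originalLabels.indicator (1 : ℝ → ℝ)) volume a b :=
  (intervalIntegrable_const (c := (1 : ℝ))).mono_fun
    ((measurable_const.indicator measurableSet_originalLabels).aestronglyMeasurable)
    (ae_of_all _ fun _ => norm_indicator_le_norm_self _ _)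

lemma slowdown_sub (a b : ℝ) :
    slowdown b - slowdown a = ∫ η in a..b, originalLabels.indicator (1 : ℝ → ℝ) η :=
  intervalIntegral.integral_interval_sub_left (intervalIntegrable_originalLabels 0 b)
    (intervalIntegrable_originalLabels 0 a)

lemma monotone_slowdown : Monotone slowdown := fun a b hab => sub_nonneg.1 <| by
  rw [slowdown_sub]
  exact intervalIntegral.integral_nonneg hab fun _ _ => indicator_nonneg (fun _ _ => zero_le_one) _

lemma slowdown_sub_le {a b : ℝ} (hab : a ≤ b) : slowdown b - slowdown a ≤ b - a := by
  rw [slowdown_sub]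
  calc _ ≤ ∫ _ in a..b, (1 : ℝ) := intervalIntegral.integral_mono_on hab
        (intervalIntegrable_originalLabels a b) intervalIntegrable_const
        fun _ _ => indicator_le_self' (fun _ _ => zero_le_one) _
    _ = b - a := by simp

lemma slowdown_sub_of_subset {a b : ℝ} (hab : a ≤ b) (h : Ioo a b ⊆ originalLabels) :
    slowdown b - slowdown a = b - a := by
  rw [slowdown_sub, intervalIntegral.integral_of_le hab, integral_Ioc_eq_integral_Ioo,
    setIntegral_congr_fun measurableSet_Ioo fun ξ hξ => indicator_of_mem (h hξ) (1 : ℝ → ℝ)]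
  simp [hab]

lemma slowdown_of_nonpos {ξ : ℝ} (hξ : ξ ≤ 0) : slowdown ξ = ξ := by
  have h0 : slowdown 0 = 0 := intervalIntegral.integral_same
  linarith [slowdown_sub_of_subset hξ fun η hη => mem_originalLabels_of_neg hη.2]

lemma slowdown_eq_of_mem_Ioo {m : ℕ} {ξ : ℝ} (hξ : ξ ∈ Ioo (m + fillLength m) (m + 1)) :
    slowdown ξ = slowdown (m + 1) := by
  refine (sub_eq_zero.1 ?_).symm
  rw [slowdown_sub, intervalIntegral.integral_of_le hξ.2.le, integral_Ioc_eq_integral_Ioo]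
  refine setIntegral_eq_zero_of_forall_eq_zero fun η hη => indicator_of_notMem ?_ _
  have hlt : m + fillLength m < η := hξ.1.trans hη.1
  rw [mem_originalLabels_iff ⟨by linarith [fillLength_pos m], hη.2⟩]
  exact hlt.le.not_gt

lemma tendsto_slowdown : Tendsto (fun n : ℕ => slowdown n) atTop atTop := by
  refine tendsto_atTop_mono (fun n => ?_) tendsto_sum_fillLength
  induction n with
  | zero => simp [slowdown]
  | succ m ih =>
    have hfill := slowdown_sub_of_subset (a := m) (b := m + fillLength m)
      (by linarith [fillLength_pos m]) fun η hη => (mem_originalLabels_iff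
        ⟨hη.1.le, by linarith [hη.2, fillLength_le_half m]⟩).2 hη.2
    have hrest : slowdown (m + fillLength m) ≤ slowdown (m + 1) :=
      monotone_slowdown (by linarith [fillLength_le_half m])
    rw [Finset.sum_range_succ]
    push_cast
    linarith

end Slowdown

section Layout

/-- The initial position of the label `ξ`: the point whose energy coordinate is `slowdown ξ`. -/
noncomputable def layout (p : ℝ) (g : ℝ → ℝ) (ξ : ℝ) : ℝ :=
  Function.invFun (energy p g) (slowdown ξ)

variable {p : ℝ} {g : ℝ → ℝ}

lemma layout_eq_of_mem_Ioo {m : ℕ} {ξ : ℝ} (hξ : ξ ∈ Ioo (m + fillLength m) (m + 1)) :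
    layout p g ξ = layout p g (m + 1) := by
  rw [layout, layout, slowdown_eq_of_mem_Ioo hξ]

lemma deriv_layout_of_mem_Ioo {m : ℕ} {ξ : ℝ} (hξ : ξ ∈ Ioo (m + fillLength m) (m + 1)) :
    deriv (layout p g) ξ = 0 := by
  have hloc : layout p g =ᶠ[𝓝 ξ] fun _ => layout p g (m + 1) :=
    eventuallyEq_of_mem (isOpen_Ioo.mem_nhds hξ) fun _ => layout_eq_of_mem_Ioo
  rw [hloc.deriv_eq, deriv_const]

variable (hgp : ∀ a b, IntervalIntegrable (fun x => |g x| ^ p) volume a b)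
include hgp

lemma energy_layout (ξ : ℝ) : energy p g (layout p g ξ) = slowdown ξ :=
  Function.rightInverse_invFun (surjective_energy hgp) _

lemma layout_of_nonpos (hp : p ≠ 0) (hg0 : ∀ x ≤ 0, g x = 0) {ξ : ℝ} (hξ : ξ ≤ 0) :
    layout p g ξ = ξ :=
  (strictMono_energy hgp).injective <| by
    rw [energy_layout hgp, slowdown_of_nonpos hξ, energy_of_nonpos hp hg0 hξ]

lemma deriv_layout_of_neg (hp : p ≠ 0) (hg0 : ∀ x ≤ 0, g x = 0) {ξ : ℝ} (hξ : ξ < 0) :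
    deriv (layout p g) ξ = 1 := by
  have hloc : layout p g =ᶠ[𝓝 ξ] id := eventuallyEq_of_mem (Iio_mem_nhds hξ)
    fun y (hy : y < 0) => layout_of_nonpos hgp hp hg0 hy.le
  rw [hloc.deriv_eq, deriv_id]

lemma integral_layout_of_nonpos (hp : p ≠ 0) (hg0 : ∀ x ≤ 0, g x = 0) {ξ : ℝ} (hξ : ξ ≤ 0) :
    ∫ y in (0 : ℝ)..layout p g ξ, g y = 0 := by
  rw [layout_of_nonpos hgp hp hg0 hξ, intervalIntegral.integral_symm,
    intervalIntegral.integral_of_le hξ,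
    setIntegral_eq_zero_of_forall_eq_zero fun y hy => hg0 y hy.2, neg_zero]

lemma monotone_layout : Monotone (layout p g) := fun x y hxy => by
  rw [← (strictMono_energy hgp).le_iff_le, energy_layout hgp, energy_layout hgp]
  exact monotone_slowdown hxy

lemma lipschitzWith_one_layout : LipschitzWith 1 (layout p g) := by
  refine lipschitzWith_one_of_abs_sub_le_sub fun x y hxy => ?_
  have hmono := monotone_layout hgp hxy
  have henergy := sub_le_energy_sub hgp hmono
  rw [energy_layout hgp, energy_layout hgp] at henergy
  rw [abs_of_nonneg (sub_nonneg.2 hmono)]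
  exact henergy.trans (slowdown_sub_le hxy)

lemma tendsto_layout : Tendsto (fun n : ℕ => layout p g n) atTop atTop := by
  refine tendsto_atTop.2 fun b => ?_
  filter_upwards [tendsto_slowdown.eventually_ge_atTop (energy p g b)] with n hn
  rwa [← energy_layout hgp, (strictMono_energy hgp).le_iff_le] at hn

lemma abs_integral_layout_le (hp : 1 < p) {x y : ℝ} (hxy : x ≤ y) :
    |∫ z in layout p g x..layout p g y, g z| ≤
      (y - x) ^ p⁻¹ * (layout p g y - layout p g x) ^ (1 - p⁻¹) := by
  have hmono := monotone_layout hgp hxy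
  have henergy := abs_integral_le_energy_sub_rpow hgp hp hmono
  rw [energy_layout hgp, energy_layout hgp] at henergy
  have hnonneg := sub_nonneg.2 (monotone_slowdown hxy)
  have hinv : 0 ≤ p⁻¹ := inv_nonneg.2 (by linarith)
  refine henergy.trans (mul_le_mul_of_nonneg_right ?_ (rpow_nonneg (sub_nonneg.2 hmono) _))
  exact rpow_le_rpow hnonneg (slowdown_sub_le hxy) hinv

end Layout

/-- Initial data of the flow in label coordinates: at time `t` the material at the label `ξ` is
stretched to the density `|q|^p` with `q = q₀ + c a` and carries `u_x = c / q`, where `a` is the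
field of `LabelData.exists_field`. Material that is absent initially (`q₀ = 0`, `c = 1`) fills a
slot of every unit cell of positive labels; it may appear when the given material is exhausted. -/
structure LabelData (p : ℝ) where
  q₀ : ℝ → ℝ
  c : ℝ → ℝ
  two_le : 2 ≤ p
  measurable_q₀ : Measurable q₀
  measurable_c : Measurable c
  abs_q₀_le : ∀ ξ, |q₀ ξ| ≤ 1
  abs_c_le : ∀ ξ, |c ξ| ≤ 1
  q₀_of_neg : ∀ ξ < 0, q₀ ξ = 1
  c_of_neg : ∀ ξ < 0, c ξ = 0
  q₀_of_mem_Ioo : ∀ m : ℕ, ∀ ξ ∈ Ioo (m + fillLength m) (m + 1), q₀ ξ = 0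
  c_of_mem_Ioo : ∀ m : ℕ, ∀ ξ ∈ Ioo (m + fillLength m) (m + 1), c ξ = 1
  tendsto_integral : Tendsto (fun n : ℕ => ∫ η in (0 : ℝ)..n, |q₀ η| ^ p) atTop atTop

lemma exists_labelData {p : ℝ} (hp : 2 ≤ p) {g : ℝ → ℝ} (hg0 : ∀ x ≤ 0, g x = 0)
    (hg : ∀ a b, IntervalIntegrable g volume a b)
    (hgp : ∀ a b, IntervalIntegrable (fun x => |g x| ^ p) volume a b) :
    ∃ D : LabelData p, ∀ ξ, ∫ η in (0 : ℝ)..ξ, D.c η * oddPow p (D.q₀ η) =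
      ∫ y in (0 : ℝ)..∫ η in (0 : ℝ)..ξ, |D.q₀ η| ^ p, g y := by
  have hp1 : 1 < p := by linarith
  have hp0 : p ≠ 0 := by linarith
  set A := layout p g
  set B : ℝ → ℝ := fun ξ => ∫ y in (0 : ℝ)..A ξ, g y
  have hA : Monotone A := monotone_layout hgp
  have hA1 : LipschitzWith 1 A := lipschitzWith_one_layout hgp
  have hA0 : A 0 = 0 := layout_of_nonpos hgp hp0 hg0 le_rfl
  have hB : ∀ x y, x ≤ y → |B y - B x| ≤ (y - x) ^ p⁻¹ * (A y - A x) ^ (1 - p⁻¹) :=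
    fun x y hxy => by
      rw [intervalIntegral.integral_interval_sub_left (hg _ _) (hg _ _)]
      exact abs_integral_layout_le hgp hp1 hxy
  have hB0 : ∀ ξ ≤ 0, B ξ = 0 := fun ξ => integral_layout_of_nonpos hgp hp0 hg0
  have hA' : ∀ ξ < 0, deriv A ξ = 1 := fun ξ => deriv_layout_of_neg hgp hp0 hg0
  have hB' : ∀ ξ < 0, deriv B ξ = 0 := fun ξ hξ => by
    have hloc : B =ᶠ[𝓝 ξ] fun _ => 0 := eventuallyEq_of_mem (Iio_mem_nhds hξ)
      fun y (hy : y < 0) => hB0 y hy.le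
    rw [hloc.deriv_eq, deriv_const]
  have hslot : ∀ m : ℕ, ∀ ξ ∈ Ioo (m + fillLength m) (m + 1), deriv A ξ = 0 :=
    fun _ _ => deriv_layout_of_mem_Ioo
  have hAint : ∀ ξ, ∫ η in (0 : ℝ)..ξ, |initialStretch p A η| ^ p = A ξ := fun ξ => by
    rw [integral_abs_initialStretch_rpow hp0 hA hA1, hA0, sub_zero]
  refine ⟨⟨initialStretch p A, initialAmplitude p A B, hp, measurable_initialStretch,
    measurable_initialAmplitude, abs_initialStretch_le_one (by linarith) hA hA1,
    abs_initialAmplitude_le_one hp1 hA hB, ?_, ?_, ?_, ?_, ?_⟩, fun ξ => ?_⟩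
  · exact fun ξ hξ => by rw [initialStretch, hA' ξ hξ, one_rpow]
  · exact fun ξ hξ => by simp [initialAmplitude, hA' ξ hξ, hB' ξ hξ]
  · exact fun m ξ hξ => by rw [initialStretch, hslot m ξ hξ, zero_rpow (inv_ne_zero hp0)]
  · exact fun m ξ hξ => by rw [initialAmplitude, if_pos (hslot m ξ hξ)]
  · simpa only [hAint] using tendsto_layout hgp
  · simp only [hAint, integral_initialAmplitude_mul_oddPow hp1 hA hB hA1, hB0 0 le_rfl, sub_zero, B]

/-! ### The Lagrangian system -/

namespace LabelData

variable {p : ℝ} (D : LabelData p)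

/-- The stretch `q = q₀ + c a`; the material density is `|q|^p`. -/
noncomputable def stretch (a : ℝ × ℝ → ℝ) (ξ t : ℝ) : ℝ := D.q₀ ξ + D.c ξ * a (ξ, t)

/-- The derivative `c |q|^{p-2} q` of the solution with respect to the label. -/
noncomputable def valueDensity (a : ℝ × ℝ → ℝ) (ξ t : ℝ) : ℝ :=
  D.c ξ * oddPow p (D.stretch a ξ t)

/-- The value of the solution along the characteristic with label `ξ`. -/
noncomputable def value (a : ℝ × ℝ → ℝ) (ξ t : ℝ) : ℝ := ∫ η in (0 : ℝ)..ξ, D.valueDensity a η t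

section Field

variable {a b : ℝ × ℝ → ℝ}

lemma measurable_stretch (ha : Continuous a) :
    Measurable fun z : ℝ × ℝ => D.stretch a z.1 z.2 :=
  (D.measurable_q₀.comp measurable_fst).add
    ((D.measurable_c.comp measurable_fst).mul ha.measurable)

lemma continuous_stretch (ha : Continuous a) (ξ : ℝ) : Continuous (D.stretch a ξ) := by
  unfold stretch
  fun_prop

lemma measurable_valueDensity (ha : Continuous a) :
    Measurable fun z : ℝ × ℝ => D.valueDensity a z.1 z.2 :=
  (D.measurable_c.comp measurable_fst).mul
    ((continuous_oddPow D.two_le).measurable.comp (D.measurable_stretch ha))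

lemma continuous_valueDensity (ha : Continuous a) (ξ : ℝ) : Continuous (D.valueDensity a ξ) :=
  continuous_const.mul ((continuous_oddPow D.two_le).comp (D.continuous_stretch ha ξ))

variable {m : ℝ} (hm : 0 ≤ m) (ha : a ∈ envelope ℝ fun z => m * |z.2|)
include ha

lemma abs_stretch_le (ξ t : ℝ) : |D.stretch a ξ t| ≤ 1 + m * |t| :=
  calc |D.q₀ ξ + D.c ξ * a (ξ, t)| ≤ |D.q₀ ξ| + |D.c ξ| * |a (ξ, t)| := by
        rw [← abs_mul]; exact abs_add_le _ _
    _ ≤ 1 + 1 * (m * |t|) := add_le_add (D.abs_q₀_le ξ)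
        (mul_le_mul (D.abs_c_le ξ) (ha.2 (ξ, t)) (abs_nonneg _) zero_le_one)
    _ = 1 + m * |t| := by rw [one_mul]

lemma abs_valueDensity_le (ξ t : ℝ) : |D.valueDensity a ξ t| ≤ (1 + m * |t|) ^ (p - 1) := by
  rw [valueDensity, abs_mul, abs_oddPow D.two_le]
  calc |D.c ξ| * |D.stretch a ξ t| ^ (p - 1) ≤ 1 * |D.stretch a ξ t| ^ (p - 1) := by
        gcongr; exact D.abs_c_le ξ
    _ ≤ (1 + m * |t|) ^ (p - 1) := by
        rw [one_mul]
        exact rpow_le_rpow (abs_nonneg _) (D.abs_stretch_le ha ξ t) (by linarith [D.two_le])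

lemma intervalIntegrable_valueDensity (t x y : ℝ) :
    IntervalIntegrable (fun ξ => D.valueDensity a ξ t) volume x y :=
  (intervalIntegrable_const (c := (1 + m * |t|) ^ (p - 1))).mono_fun
    ((D.measurable_valueDensity ha.1).comp measurable_prodMk_right).aestronglyMeasurable
    (ae_of_all _ fun ξ => (D.abs_valueDensity_le ha ξ t).trans (le_abs_self _))

lemma value_sub (t x y : ℝ) :
    D.value a y t - D.value a x t = ∫ ξ in x..y, D.valueDensity a ξ t :=
  intervalIntegral.integral_interval_sub_left (D.intervalIntegrable_valueDensity ha t 0 y)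
    (D.intervalIntegrable_valueDensity ha t 0 x)

include hm

lemma continuous_value : Continuous fun z : ℝ × ℝ => D.value a z.1 z.2 :=
  continuous_integral_of_abs_le
    (fun _ => (D.measurable_valueDensity ha.1).comp measurable_prodMk_right)
    (D.continuous_valueDensity ha.1)
    (Continuous.rpow_const (by fun_prop) fun t => Or.inl (by positivity))
    (D.abs_valueDensity_le ha)

/-- A change of the field that is at most `d e^{|ξ|}` changes the values by a multiple of the same
weight, since `∫₀^{|ξ|} e^η ≤ e^{|ξ|}`. -/
lemma abs_value_sub_value_le (hb : b ∈ envelope ℝ fun z => m * |z.2|) {d t : ℝ}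
    (hab : ∀ ξ, |a (ξ, t) - b (ξ, t)| ≤ d * exp |ξ|) (ξ : ℝ) :
    |D.value a ξ t - D.value b ξ t| ≤ (p - 1) * (1 + m * |t|) ^ (p - 2) * d * exp |ξ| := by
  set k := (p - 1) * (1 + m * |t|) ^ (p - 2)
  have hk : 0 ≤ k := mul_nonneg (by linarith [D.two_le]) (by positivity)
  have hd : 0 ≤ d := by simpa using (abs_nonneg _).trans (hab 0)
  have hpt : ∀ η, |D.valueDensity a η t - D.valueDensity b η t| ≤ k * d * exp (1 * |η|) :=
    fun η => by
      rw [valueDensity, valueDensity, ← mul_sub, abs_mul, one_mul, mul_assoc]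
      calc _ ≤ 1 * (k * |D.stretch a η t - D.stretch b η t|) := by
            gcongr
            · exact D.abs_c_le η
            · exact abs_oddPow_sub_le D.two_le (D.abs_stretch_le ha η t) (D.abs_stretch_le hb η t)
        _ ≤ k * |a (η, t) - b (η, t)| := by
            rw [one_mul, stretch, stretch, add_sub_add_left_eq_sub, ← mul_sub, abs_mul]
            exact mul_le_mul_of_nonneg_left
              (mul_le_of_le_one_left (abs_nonneg _) (D.abs_c_le η)) hk
        _ ≤ k * (d * exp |η|) := mul_le_mul_of_nonneg_left (hab η) hk
  rw [value, value, ← intervalIntegral.integral_sub (D.intervalIntegrable_valueDensity ha t 0 ξ)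
    (D.intervalIntegrable_valueDensity hb t 0 ξ)]
  have hexp : Continuous fun η : ℝ => k * d * exp (1 * |η|) := by fun_prop
  refine (intervalIntegral.norm_integral_le_abs_of_norm_le
    (f := fun η => D.valueDensity a η t - D.valueDensity b η t) (ae_of_all _ hpt)
    (hexp.intervalIntegrable _ _)).trans ?_
  rw [intervalIntegral.integral_const_mul, abs_mul, abs_of_nonneg (mul_nonneg hk hd)]
  gcongr
  simpa using abs_integral_exp_mul_abs_le one_pos ξ

end Field

section FixedPoint

variable {k : ℝ → ℝ} {M : ℝ} {L : ℝ≥0}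

/-- The Picard operator of the equation `p ∂ₜa = k(value a)`, `a = 0` at `t = 0`. -/
noncomputable def picard (k : ℝ → ℝ) (a : ℝ × ℝ → ℝ) (z : ℝ × ℝ) : ℝ :=
  p⁻¹ * ∫ s in (0 : ℝ)..z.2, k (D.value a z.1 s)

/-- The growth rate in time of the weight in which the Picard operator contracts. -/
noncomputable def growthRate (p M : ℝ) (L : ℝ≥0) (t : ℝ) : ℝ :=
  2 * (L + 1) * ((p - 1) * (1 + p⁻¹ * M * |t|) ^ (p - 2))

lemma one_le_growthRate (hp : 2 ≤ p) (hM : 0 ≤ M) (t : ℝ) : 1 ≤ growthRate p M L t := by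
  have hrate : 1 ≤ (1 + p⁻¹ * M * |t|) ^ (p - 2) :=
    one_le_rpow (le_add_of_nonneg_right (by positivity)) (by linarith)
  exact one_le_mul_of_one_le_of_one_le (by linarith [L.coe_nonneg])
    (one_le_mul_of_one_le_of_one_le (by linarith) hrate)

lemma growthRate_le_growthRate (hp : 2 ≤ p) (hM : 0 ≤ M) {s t : ℝ} (hst : |s| ≤ |t|) :
    growthRate p M L s ≤ growthRate p M L t := by
  have hp1 : 0 < p - 1 := by linarith
  have : 0 ≤ p - 2 := by linarith
  have : 0 < p := by linarith
  unfold growthRate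
  gcongr

lemma continuous_growthRate (hp : 2 ≤ p) : Continuous (growthRate p M L) :=
  continuous_const.mul (continuous_const.mul
    (Continuous.rpow_const (by fun_prop) fun _ => Or.inr (by linarith)))

variable (hM : ∀ x, |k x| ≤ M)
include hM

lemma picard_mem_envelope (hk : Continuous k) {a : ℝ × ℝ → ℝ}
    (ha : a ∈ envelope ℝ fun z => p⁻¹ * M * |z.2|) :
    D.picard k a ∈ envelope ℝ fun z => p⁻¹ * M * |z.2| := by
  have hp0 : 0 < p := by linarith [D.two_le]
  have hM0 : 0 ≤ M := (abs_nonneg _).trans (hM 0)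
  have hcont := hk.comp (D.continuous_value (mul_nonneg (inv_nonneg.2 hp0.le) hM0) ha)
  refine ⟨continuous_const.mul ?_, fun z => ?_⟩
  · exact intervalIntegral.continuous_parametric_intervalIntegral_of_continuous
      (f := fun (z : ℝ × ℝ) s => k (D.value a z.1 s))
      (hcont.comp (by fun_prop : Continuous fun y : (ℝ × ℝ) × ℝ => (y.1.1, y.2))) continuous_snd
  · change _ ≤ p⁻¹ * M * |z.2|
    rw [picard, norm_mul, norm_of_nonneg (inv_nonneg.2 hp0.le), mul_assoc]
    gcongr
    simpa using intervalIntegral.norm_integral_le_of_norm_le_const (a := 0) (b := z.2)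
      (f := fun s => k (D.value a z.1 s)) fun s _ => hM _

lemma abs_comp_value_sub_le (hk : LipschitzWith L k) {a b : ℝ × ℝ → ℝ} {d s t : ℝ}
    (ha : a ∈ envelope ℝ fun z => p⁻¹ * M * |z.2|) (hb : b ∈ envelope ℝ fun z => p⁻¹ * M * |z.2|)
    (hab : ∀ z : ℝ × ℝ, |a z - b z| ≤ d * exp (|z.1| + growthRate p M L z.2 * |z.2|))
    (hst : |s| ≤ |t|) (ξ : ℝ) : |k (D.value a ξ s) - k (D.value b ξ s)| ≤
      growthRate p M L t / 2 * d * exp |ξ| * exp (growthRate p M L t * |s|) := by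
  have hp := D.two_le
  have hM0 : 0 ≤ M := (abs_nonneg _).trans (hM 0)
  have hm : 0 ≤ p⁻¹ * M := by positivity
  set G := growthRate p M L
  have hGt : 0 ≤ G t := zero_le_one.trans (one_le_growthRate hp hM0 t)
  have hGst : G s ≤ G t := growthRate_le_growthRate hp hM0 hst
  have hd : 0 ≤ d := nonneg_of_mul_nonneg_left ((abs_nonneg _).trans (hab 0)) (exp_pos _)
  have hfield : ∀ η, |a (η, s) - b (η, s)| ≤ d * exp (G s * |s|) * exp |η| := fun η => by
    rw [mul_assoc, ← exp_add, add_comm]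
    exact hab (η, s)
  have hvalue := D.abs_value_sub_value_le hm ha hb hfield ξ
  set K := (p - 1) * (1 + p⁻¹ * M * |s|) ^ (p - 2)
  have hK0 : 0 ≤ K := mul_nonneg (by linarith) (by positivity)
  have hGs : G s = 2 * (L + 1) * K := rfl
  calc _ ≤ L * |D.value a ξ s - D.value b ξ s| := hk.dist_le_mul _ _
    _ ≤ L * (K * (d * exp (G s * |s|)) * exp |ξ|) := by gcongr
    _ = L * K * d * exp |ξ| * exp (G s * |s|) := by ring
    _ ≤ G t / 2 * d * exp |ξ| * exp (G t * |s|) := by gcongr; linarith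

lemma abs_picard_sub_le (hk : LipschitzWith L k) {a b : ℝ × ℝ → ℝ} {d : ℝ}
    (ha : a ∈ envelope ℝ fun z => p⁻¹ * M * |z.2|) (hb : b ∈ envelope ℝ fun z => p⁻¹ * M * |z.2|)
    (hab : ∀ z : ℝ × ℝ, |a z - b z| ≤ d * exp (|z.1| + growthRate p M L z.2 * |z.2|))
    (z : ℝ × ℝ) : |D.picard k a z - D.picard k b z| ≤
      1 / 2 * d * exp (|z.1| + growthRate p M L z.2 * |z.2|) := by
  have hp := D.two_le
  have hM0 : 0 ≤ M := (abs_nonneg _).trans (hM 0)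
  have hm : 0 ≤ p⁻¹ * M := by positivity
  obtain ⟨ξ, t⟩ := z
  set G := growthRate p M L
  have hG : 0 < G t := zero_lt_one.trans_le (one_le_growthRate hp hM0 t)
  have hd : 0 ≤ d := nonneg_of_mul_nonneg_left ((abs_nonneg _).trans (hab 0)) (exp_pos _)
  have hcont : ∀ a' ∈ envelope ℝ fun z : ℝ × ℝ => p⁻¹ * M * |z.2|,
      Continuous fun s => k (D.value a' ξ s) := fun a' ha' =>
    hk.continuous.comp ((D.continuous_value hm ha').comp (Continuous.prodMk_right ξ))
  have hexp : Continuous fun s : ℝ => G t / 2 * d * exp |ξ| * exp (G t * |s|) := by fun_prop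
  have hint : |∫ s in (0 : ℝ)..t, (k (D.value a ξ s) - k (D.value b ξ s))| ≤
      G t / 2 * d * exp |ξ| * (exp (G t * |t|) / G t) := by
    refine (intervalIntegral.norm_integral_le_abs_of_norm_le
      (f := fun s => k (D.value a ξ s) - k (D.value b ξ s))
      (ae_restrict_of_forall_mem measurableSet_uIoc fun s hs => D.abs_comp_value_sub_le hM hk ha hb
        hab (by simpa using abs_sub_left_of_mem_uIcc (uIoc_subset_uIcc hs)) ξ)
      (hexp.intervalIntegrable _ _)).trans ?_
    rw [intervalIntegral.integral_const_mul, abs_mul, abs_of_nonneg (by positivity)]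
    gcongr
    exact abs_integral_exp_mul_abs_le hG t
  rw [picard, picard, ← mul_sub, ← intervalIntegral.integral_sub
    ((hcont a ha).intervalIntegrable _ _) ((hcont b hb).intervalIntegrable _ _), abs_mul]
  calc _ ≤ 1 * (G t / 2 * d * exp |ξ| * (exp (G t * |t|) / G t)) := by
        gcongr
        rw [abs_of_nonneg (by positivity)]
        exact inv_le_one_of_one_le₀ (by linarith)
    _ = 1 / 2 * d * exp (|ξ| + G t * |t|) := by
        rw [exp_add]; field_simp

lemma exists_field (hk : LipschitzWith L k) :
    ∃ a ∈ envelope ℝ fun z : ℝ × ℝ => p⁻¹ * M * |z.2|, D.picard k a = a := by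
  have hp := D.two_le
  have hM0 : 0 ≤ M := (abs_nonneg _).trans (hM 0)
  have hw : Continuous fun z : ℝ × ℝ => exp (|z.1| + growthRate p M L z.2 * |z.2|) := by
    have := continuous_growthRate (M := M) (L := L) hp
    fun_prop
  refine exists_fixedPoint_mem_envelope (K := 1 / 2) (C := p⁻¹ * M) hw (fun _ => exp_pos _)
    (fun z => by positivity) (fun z => ?_) (by rw [← NNReal.coe_lt_coe]; norm_num)
    (fun a ha => D.picard_mem_envelope hM hk.continuous ha) fun a ha b hb d hab z => ?_
  · have hgrowth : |z.2| ≤ |z.1| + growthRate p M L z.2 * |z.2| :=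
      (le_mul_of_one_le_left (abs_nonneg _) (one_le_growthRate hp hM0 _)).trans
        (le_add_of_nonneg_left (abs_nonneg _))
    gcongr
    exact hgrowth.trans ((le_add_of_nonneg_right zero_le_one).trans (add_one_le_exp _))
  · simpa using D.abs_picard_sub_le hM hk ha hb hab z

end FixedPoint

end LabelData

/-- A solution of the Lagrangian form of the equation with characteristic speed `v = f'`: the field
`a` solves `p ∂ₜa = v'(U)` with `a = 0` at `t = 0`, and `M` and `L` are a bound and a Lipschitz
constant of `v'`. -/
structure LagrangianFlow (p : ℝ) (v : ℝ → ℝ) extends LabelData p where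
  M : ℝ
  L : ℝ≥0
  differentiable_speed : Differentiable ℝ v
  abs_deriv_speed_le : ∀ x, |deriv v x| ≤ M
  lipschitzWith_deriv_speed : LipschitzWith L (deriv v)
  a : ℝ × ℝ → ℝ
  mem_envelope : a ∈ envelope ℝ fun z => p⁻¹ * M * |z.2|
  picard_eq : toLabelData.picard (deriv v) a = a

namespace LagrangianFlow

variable {p : ℝ} {v : ℝ → ℝ} (F : LagrangianFlow p v)

/-- The stretch of the label `ξ` at time `t`; the density of positions is `|q|^p`. -/
noncomputable def q (ξ t : ℝ) : ℝ := F.stretch F.a ξ t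

/-- The derivative of `U` with respect to the label. -/
noncomputable def W (ξ t : ℝ) : ℝ := F.valueDensity F.a ξ t

/-- The value of the solution along the characteristic with label `ξ`. -/
noncomputable def U (ξ t : ℝ) : ℝ := F.value F.a ξ t

/-- The time derivative of `W`. -/
noncomputable def Wt (ξ t : ℝ) : ℝ :=
  (1 - p⁻¹) * deriv v (F.U ξ t) * (F.c ξ ^ 2 * |F.q ξ t| ^ (p - 2))

/-- The position at time `t` of the characteristic with label `ξ`. -/
noncomputable def X (ξ t : ℝ) : ℝ := v 0 * t + ∫ η in (0 : ℝ)..ξ, |F.q η t| ^ p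

/-- A bound for `|q|` at time `t`. -/
noncomputable def R (t : ℝ) : ℝ := 1 + p⁻¹ * F.M * |t|

include F in
lemma p_pos : 0 < p := by linarith [F.two_le]

include F in
lemma inv_p_le_one : p⁻¹ ≤ 1 := inv_le_one_of_one_le₀ (by linarith [F.two_le])

lemma M_nonneg : 0 ≤ F.M := (abs_nonneg _).trans (F.abs_deriv_speed_le 0)

lemma inv_p_mul_M_nonneg : 0 ≤ p⁻¹ * F.M := mul_nonneg (inv_nonneg.2 F.p_pos.le) F.M_nonneg

lemma one_le_R (t : ℝ) : 1 ≤ F.R t :=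
  le_add_of_nonneg_right (mul_nonneg F.inv_p_mul_M_nonneg (abs_nonneg t))

lemma R_le_R {s t : ℝ} (hst : |s| ≤ |t|) : F.R s ≤ F.R t :=
  add_le_add_right (mul_le_mul_of_nonneg_left hst F.inv_p_mul_M_nonneg) 1

lemma R_rpow_le_R_rpow {s t : ℝ} (hst : |s| ≤ |t|) : F.R s ^ (p - 1) ≤ F.R t ^ (p - 1) :=
  rpow_le_rpow (zero_le_one.trans (F.one_le_R s)) (F.R_le_R hst) (by linarith [F.two_le])

lemma continuous_R : Continuous F.R := by unfold R; fun_prop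

include F in
lemma continuous_deriv_speed : Continuous (deriv v) := F.lipschitzWith_deriv_speed.continuous

lemma abs_speed_sub_le (x y : ℝ) : |v x - v y| ≤ F.M * |x - y| :=
  convex_univ.norm_image_sub_le_of_norm_deriv_le (fun x _ => F.differentiable_speed x)
    (fun x _ => F.abs_deriv_speed_le x) (mem_univ y) (mem_univ x)

lemma a_eq (ξ t : ℝ) : F.a (ξ, t) = p⁻¹ * ∫ s in (0 : ℝ)..t, deriv v (F.U ξ s) :=
  (congrFun F.picard_eq (ξ, t)).symm

lemma abs_q_le (ξ t : ℝ) : |F.q ξ t| ≤ F.R t := F.abs_stretch_le F.mem_envelope ξ t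

lemma measurable_q : Measurable fun z : ℝ × ℝ => F.q z.1 z.2 :=
  F.measurable_stretch F.mem_envelope.1

lemma abs_W_le (ξ t : ℝ) : |F.W ξ t| ≤ F.R t ^ (p - 1) := F.abs_valueDensity_le F.mem_envelope ξ t

lemma measurable_W : Measurable fun z : ℝ × ℝ => F.W z.1 z.2 :=
  F.measurable_valueDensity F.mem_envelope.1

lemma intervalIntegrable_W (t a b : ℝ) : IntervalIntegrable (fun ξ => F.W ξ t) volume a b :=
  F.intervalIntegrable_valueDensity F.mem_envelope t a b

lemma U_sub (t ξ η : ℝ) : F.U η t - F.U ξ t = ∫ y in ξ..η, F.W y t :=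
  F.value_sub F.mem_envelope t ξ η

lemma U_zero (t : ℝ) : F.U 0 t = 0 := intervalIntegral.integral_same

lemma continuous_U : Continuous fun z : ℝ × ℝ => F.U z.1 z.2 :=
  F.continuous_value F.inv_p_mul_M_nonneg F.mem_envelope

lemma continuous_U_right (ξ : ℝ) : Continuous (F.U ξ) :=
  F.continuous_U.comp (Continuous.prodMk_right ξ)

lemma abs_U_sub_le (ξ η t : ℝ) : |F.U η t - F.U ξ t| ≤ F.R t ^ (p - 1) * |η - ξ| := by
  rw [U_sub]
  exact intervalIntegral.norm_integral_le_of_norm_le_const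
    (f := fun y => F.W y t) fun y _ => F.abs_W_le y t

/-! ### Characteristics -/

lemma density_nonneg (ξ t : ℝ) : 0 ≤ |F.q ξ t| ^ p := rpow_nonneg (abs_nonneg _) _

lemma density_le (ξ t : ℝ) : |F.q ξ t| ^ p ≤ F.R t ^ p :=
  rpow_le_rpow (abs_nonneg _) (F.abs_q_le ξ t) F.p_pos.le

lemma measurable_density : Measurable fun z : ℝ × ℝ => |F.q z.1 z.2| ^ p :=
  (continuous_abs_rpow F.two_le).measurable.comp F.measurable_q

lemma measurable_density_left (t : ℝ) : Measurable fun ξ => |F.q ξ t| ^ p :=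
  F.measurable_density.comp measurable_prodMk_right

lemma intervalIntegrable_density (t a b : ℝ) :
    IntervalIntegrable (fun ξ => |F.q ξ t| ^ p) volume a b :=
  (intervalIntegrable_const (c := F.R t ^ p)).mono_fun
    (F.measurable_density_left t).aestronglyMeasurable (ae_of_all _ fun ξ =>
      (abs_of_nonneg (F.density_nonneg ξ t)).trans_le
        ((F.density_le ξ t).trans (le_abs_self _)))

lemma X_sub (t ξ η : ℝ) : F.X η t - F.X ξ t = ∫ y in ξ..η, |F.q y t| ^ p := by
  rw [X, X, add_sub_add_left_eq_sub]
  exact intervalIntegral.integral_interval_sub_left (F.intervalIntegrable_density t 0 η)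
    (F.intervalIntegrable_density t 0 ξ)

lemma monotone_X (t : ℝ) : Monotone fun ξ => F.X ξ t := fun ξ η hξη => sub_nonneg.1 <| by
  rw [X_sub]
  exact intervalIntegral.integral_nonneg hξη fun y _ => F.density_nonneg y t

lemma continuous_X : Continuous fun z : ℝ × ℝ => F.X z.1 z.2 := by
  refine (continuous_const.mul continuous_snd).add (continuous_integral_of_abs_le
    (h := fun η t => |F.q η t| ^ p) (R := fun t => F.R t ^ p)
    F.measurable_density_left (fun η => ?_) ?_ fun η t => ?_)
  · exact (continuous_abs_rpow F.two_le).comp (F.continuous_stretch F.mem_envelope.1 η)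
  · exact F.continuous_R.rpow_const fun _ => Or.inr F.p_pos.le
  · exact (abs_of_nonneg (F.density_nonneg η t)).trans_le (F.density_le η t)

lemma continuous_X_left (t : ℝ) : Continuous fun ξ => F.X ξ t :=
  F.continuous_X.comp (Continuous.prodMk_left t)

lemma hasDerivAt_q (ξ t : ℝ) :
    HasDerivAt (F.q ξ) (F.c ξ * (p⁻¹ * deriv v (F.U ξ t))) t := by
  have hcont : Continuous fun s => deriv v (F.U ξ s) :=
    F.continuous_deriv_speed.comp (F.continuous_U_right ξ)
  have ha : HasDerivAt (fun t => F.a (ξ, t)) (p⁻¹ * deriv v (F.U ξ t)) t := by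
    simp only [a_eq]
    exact (hcont.integral_hasStrictDerivAt 0 t).hasDerivAt.const_mul p⁻¹
  exact (ha.const_mul (F.c ξ)).const_add (F.q₀ ξ)

lemma hasDerivAt_W (ξ t : ℝ) : HasDerivAt (F.W ξ) (F.Wt ξ t) t := by
  have h := ((hasDerivAt_oddPow F.two_le (F.q ξ t)).comp t (F.hasDerivAt_q ξ t)).const_mul (F.c ξ)
  refine h.congr_deriv ?_
  have := F.p_pos
  rw [Wt]
  field_simp

lemma measurable_Wt : Measurable fun z : ℝ × ℝ => F.Wt z.1 z.2 :=
  (measurable_const.mul (F.continuous_deriv_speed.comp F.continuous_U).measurable).mul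
    (((F.measurable_c.comp measurable_fst).pow_const 2).mul (F.measurable_q.abs.pow_const _))

lemma abs_Wt_le (ξ t : ℝ) : |F.Wt ξ t| ≤ F.M * F.R t ^ (p - 2) := by
  have hp := inv_pos.2 F.p_pos
  have hq : |F.q ξ t| ^ (p - 2) ≤ F.R t ^ (p - 2) :=
    rpow_le_rpow (abs_nonneg _) (F.abs_q_le ξ t) (by linarith [F.two_le])
  have hc : F.c ξ ^ 2 ≤ 1 := (sq_le_one_iff_abs_le_one _).2 (F.abs_c_le ξ)
  have hM : |(1 - p⁻¹) * deriv v (F.U ξ t)| ≤ F.M := by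
    rw [abs_mul, abs_of_nonneg (sub_nonneg.2 F.inv_p_le_one)]
    exact (mul_le_of_le_one_left (abs_nonneg _) (by linarith)).trans (F.abs_deriv_speed_le _)
  rw [Wt, abs_mul, abs_of_nonneg (by positivity : 0 ≤ F.c ξ ^ 2 * |F.q ξ t| ^ (p - 2))]
  exact mul_le_mul hM ((mul_le_of_le_one_left (by positivity) hc).trans hq) (by positivity)
    F.M_nonneg

lemma hasDerivAt_density (ξ t : ℝ) :
    HasDerivAt (fun t => |F.q ξ t| ^ p) (F.W ξ t * deriv v (F.U ξ t)) t := by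
  have hp : 1 < p := by linarith [F.two_le]
  refine ((hasDerivAt_abs_rpow (F.q ξ t) hp).comp t (F.hasDerivAt_q ξ t)).congr_deriv ?_
  have := F.p_pos
  rw [W, LabelData.valueDensity, oddPow, ← q]
  field_simp

/-- The chain rule for the Lipschitz function `v ∘ U`. -/
lemma integral_W_mul_deriv_speed (ξ t : ℝ) :
    ∫ η in (0 : ℝ)..ξ, F.W η t * deriv v (F.U η t) = v (F.U ξ t) - v 0 := by
  have hlip : LipschitzWith (F.M * F.R t ^ (p - 1)).toNNReal fun η => v (F.U η t) :=
    LipschitzWith.of_dist_le' fun η η' => by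
      rw [dist_eq, dist_eq, mul_assoc]
      exact (F.abs_speed_sub_le _ _).trans
        (mul_le_mul_of_nonneg_left (F.abs_U_sub_le η' η t) F.M_nonneg)
  have hac := (hlip.lipschitzOnWith (s := uIcc 0 ξ)).absolutelyContinuousOnInterval
  have hftc := hac.integral_deriv_eq_sub
  rw [U_zero] at hftc
  rw [← hftc]
  refine intervalIntegral.integral_congr_ae ?_
  filter_upwards [(F.intervalIntegrable_W t 0 ξ).ae_hasDerivAt_integral] with η hη hmem
  have hU : HasDerivAt (fun η => F.U η t) (F.W η t) η :=
    hη (uIoc_subset_uIcc hmem) 0 left_mem_uIcc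
  rw [mul_comm]
  exact ((F.differentiable_speed _).hasDerivAt.comp η hU).deriv.symm

lemma measurable_W_mul_deriv_speed (t : ℝ) : Measurable fun η => F.W η t * deriv v (F.U η t) :=
  (F.measurable_W.comp measurable_prodMk_right).mul
    (F.continuous_deriv_speed.comp
      (F.continuous_U.comp (Continuous.prodMk_left t))).measurable

lemma abs_W_mul_deriv_speed_le (η t : ℝ) :
    |F.W η t * deriv v (F.U η t)| ≤ F.R t ^ (p - 1) * F.M := by
  rw [abs_mul]
  exact mul_le_mul (F.abs_W_le η t) (F.abs_deriv_speed_le _) (abs_nonneg _)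
    (rpow_nonneg (zero_le_one.trans (F.one_le_R t)) _)

lemma hasDerivAt_X (ξ t : ℝ) : HasDerivAt (F.X ξ) (v (F.U ξ t)) t := by
  have hbound : ∀ s ∈ Metric.ball t 1, F.R s ^ (p - 1) ≤ F.R (|t| + 1) ^ (p - 1) := fun s hs => by
    have hst : |s| ≤ |(|t| + 1)| := by
      have hball : |s - t| < 1 := mem_ball_iff_norm.1 hs
      rw [abs_of_nonneg (by positivity : (0 : ℝ) ≤ |t| + 1)]
      linarith [abs_sub_abs_le_abs_sub s t]
    exact F.R_rpow_le_R_rpow hst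
  have h : HasDerivAt (fun t => ∫ η in (0 : ℝ)..ξ, |F.q η t| ^ p)
      (∫ η in (0 : ℝ)..ξ, F.W η t * deriv v (F.U η t)) t := by
    refine (intervalIntegral.hasDerivAt_integral_of_dominated_loc_of_deriv_le
      (F' := fun t η => F.W η t * deriv v (F.U η t))
      (bound := fun _ => F.R (|t| + 1) ^ (p - 1) * F.M) (Metric.ball_mem_nhds t one_pos)
      (Eventually.of_forall fun s => (F.measurable_density_left s).aestronglyMeasurable)
      (F.intervalIntegrable_density t 0 ξ)
      (F.measurable_W_mul_deriv_speed t).aestronglyMeasurable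
      (ae_of_all _ fun η _ s hs => ?_) intervalIntegrable_const
      (ae_of_all _ fun η _ s _ => F.hasDerivAt_density η s)).2
    exact (F.abs_W_mul_deriv_speed_le η s).trans
      (mul_le_mul_of_nonneg_right (hbound s hs) F.M_nonneg)
  refine (((hasDerivAt_id t).const_mul (v 0)).add h).congr_deriv ?_
  rw [integral_W_mul_deriv_speed]
  ring

lemma q_of_neg {ξ : ℝ} (hξ : ξ < 0) (t : ℝ) : F.q ξ t = 1 := by
  simp [q, LabelData.stretch, F.q₀_of_neg ξ hξ, F.c_of_neg ξ hξ]

lemma U_of_nonpos {ξ : ℝ} (hξ : ξ ≤ 0) (t : ℝ) : F.U ξ t = 0 := by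
  rw [U, LabelData.value, intervalIntegral.integral_symm, neg_eq_zero]
  refine intervalIntegral.integral_zero_ae ?_
  filter_upwards [compl_mem_ae_iff.2 (measure_singleton (0 : ℝ))] with η hη hmem
  rw [uIoc_of_le hξ] at hmem
  simp [LabelData.valueDensity, F.c_of_neg η (lt_of_le_of_ne hmem.2 hη)]

lemma X_of_nonpos {ξ : ℝ} (hξ : ξ ≤ 0) (t : ℝ) : F.X ξ t = v 0 * t + ξ := by
  have hone : ∫ η in ξ..0, |F.q η t| ^ p = ∫ _ in ξ..0, (1 : ℝ) :=
    intervalIntegral.integral_congr_Ioo_of_le hξ fun η hη => by simp [F.q_of_neg hη.2]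
  rw [X, intervalIntegral.integral_symm, hone, intervalIntegral.integral_const]
  simp

/-! ### Escape to infinity of the positions -/

/-- A Lipschitz constant of the field `a` in the label at time `t`. -/
noncomputable def slope (t : ℝ) : ℝ := p⁻¹ * (F.L * F.R t ^ (p - 1) * |t|)

lemma slope_nonneg (t : ℝ) : 0 ≤ F.slope t :=
  mul_nonneg (inv_nonneg.2 F.p_pos.le) (mul_nonneg (mul_nonneg F.L.coe_nonneg
    (rpow_nonneg (zero_le_one.trans (F.one_le_R t)) _)) (abs_nonneg t))

lemma slope_le_slope {s t : ℝ} (hst : |s| ≤ |t|) : F.slope s ≤ F.slope t := by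
  have hp := F.p_pos
  have hR := rpow_nonneg (zero_le_one.trans (F.one_le_R t)) (p - 1)
  have := F.R_rpow_le_R_rpow hst
  unfold slope
  gcongr

lemma abs_a_sub_le (ξ η t : ℝ) : |F.a (η, t) - F.a (ξ, t)| ≤ F.slope t * |η - ξ| := by
  have hint : ∀ ζ, IntervalIntegrable (fun s => deriv v (F.U ζ s)) volume 0 t := fun ζ =>
    (F.continuous_deriv_speed.comp (F.continuous_U_right ζ)).intervalIntegrable 0 t
  rw [a_eq, a_eq, ← mul_sub, ← intervalIntegral.integral_sub (hint η) (hint ξ), abs_mul,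
    abs_of_pos (inv_pos.2 F.p_pos), slope, mul_assoc, mul_right_comm]
  refine mul_le_mul_of_nonneg_left ?_ (inv_nonneg.2 F.p_pos.le)
  refine (intervalIntegral.norm_integral_le_of_norm_le_const
    (f := fun s => deriv v (F.U η s) - deriv v (F.U ξ s))
    (C := F.L * (F.R t ^ (p - 1) * |η - ξ|)) fun s hs => ?_).trans_eq (by rw [sub_zero]; ring)
  have hst : |s| ≤ |t| := by simpa using abs_sub_left_of_mem_uIcc (uIoc_subset_uIcc hs)
  refine (F.lipschitzWith_deriv_speed.dist_le_mul (F.U η s) (F.U ξ s)).trans ?_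
  exact mul_le_mul_of_nonneg_left ((F.abs_U_sub_le ξ η s).trans
    (mul_le_mul_of_nonneg_right (F.R_rpow_le_R_rpow hst) (abs_nonneg _))) F.L.coe_nonneg

/-- Initially present material can lose its stretch only where the field is large, and there the
slot of the same unit cell is stretched by the field. -/
lemma abs_q₀_rpow_le (t : ℝ) {m : ℕ} {ξ : ℝ} (hξ : ξ ∈ Ioo (m : ℝ) (m + fillLength m)) :
    |F.q₀ ξ| ^ p ≤ 3 ^ (p - 1) * (|F.q ξ t| ^ p + |F.q (ξ + fillLength m) t| ^ p +
      (F.slope t * fillLength m) ^ p) := by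
  set d := fillLength m
  have hd : 0 ≤ d := (fillLength_pos m).le
  have hslot : ξ + d ∈ Ioo (m + d : ℝ) (m + 1) :=
    ⟨by linarith [hξ.1], by linarith [hξ.2, fillLength_le_half m]⟩
  have hq : F.q (ξ + d) t = F.a (ξ + d, t) := by
    simp [q, LabelData.stretch, F.q₀_of_mem_Ioo m _ hslot, F.c_of_mem_Ioo m _ hslot]
  have hq₀ : |F.q₀ ξ| ≤ |F.q ξ t| + |F.a (ξ, t)| := by
    have hca : |F.c ξ * F.a (ξ, t)| ≤ |F.a (ξ, t)| := by
      rw [abs_mul]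
      exact mul_le_of_le_one_left (abs_nonneg _) (F.abs_c_le ξ)
    have htri := abs_sub (F.q ξ t) (F.c ξ * F.a (ξ, t))
    rw [q, LabelData.stretch, add_sub_cancel_right] at htri
    exact htri.trans (add_le_add_right hca _)
  have ha : |F.a (ξ, t)| ≤ |F.q (ξ + d) t| + F.slope t * d := by
    have hlip := F.abs_a_sub_le (ξ + d) ξ t
    rw [sub_add_cancel_left, abs_neg, abs_of_nonneg hd] at hlip
    rw [hq]
    linarith [abs_sub_abs_le_abs_sub (F.a (ξ, t)) (F.a (ξ + d, t))]
  have hBd : 0 ≤ F.slope t * d := mul_nonneg (F.slope_nonneg t) hd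
  have hsum : |F.q₀ ξ| ≤ |F.q ξ t| + |F.q (ξ + d) t| + F.slope t * d := by linarith
  refine (rpow_le_rpow (abs_nonneg _) hsum F.p_pos.le).trans ?_
  have hpow := rpow_sum_le_const_mul_sum_rpow_of_nonneg Finset.univ
    (f := ![|F.q ξ t|, |F.q (ξ + d) t|, F.slope t * d]) (p := p) (by linarith [F.two_le])
    (by simp [Fin.forall_fin_succ, hBd])
  simpa [Fin.sum_univ_three] using hpow

lemma intervalIntegrable_abs_q₀_rpow (a b : ℝ) :
    IntervalIntegrable (fun ξ => |F.q₀ ξ| ^ p) volume a b :=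
  (intervalIntegrable_const (c := (1 : ℝ))).mono_fun
    ((continuous_abs_rpow F.two_le).measurable.comp F.measurable_q₀).aestronglyMeasurable
    (ae_of_all _ fun ξ => by
      change ‖|F.q₀ ξ| ^ p‖ ≤ ‖(1 : ℝ)‖
      rw [norm_of_nonneg (rpow_nonneg (abs_nonneg _) _), norm_one]
      exact rpow_le_one (abs_nonneg _) (F.abs_q₀_le ξ) F.p_pos.le)

lemma integral_abs_q₀_rpow_cell_le (t : ℝ) (m : ℕ) :
    ∫ ξ in (m : ℝ)..(m + 1), |F.q₀ ξ| ^ p ≤ 3 ^ (p - 1) *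
      ((∫ ξ in (m : ℝ)..(m + 1), |F.q ξ t| ^ p) + F.slope t ^ p * fillLength m ^ 2) := by
  set d := fillLength m
  set B := F.slope t
  have hd0 : 0 < d := fillLength_pos m
  have hd1 : d ≤ 1 / 2 := fillLength_le_half m
  have hslot : ∫ ξ in (m + d : ℝ)..(m + 1), |F.q₀ ξ| ^ p = 0 := by
    rw [intervalIntegral.integral_congr_Ioo_of_le (g := 0) (by linarith) fun ξ hξ => ?_]
    · exact intervalIntegral.integral_zero
    · simp [F.q₀_of_mem_Ioo m ξ hξ, zero_rpow F.p_pos.ne']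
  have hq := F.intervalIntegrable_density t
  have hshift : IntervalIntegrable (fun ξ => |F.q (ξ + d) t| ^ p) volume m (m + d) := by
    simpa using (hq (m + d) (m + d + d)).comp_add_right d
  have hmono : ∫ ξ in (m : ℝ)..(m + d), |F.q₀ ξ| ^ p ≤ ∫ ξ in (m : ℝ)..(m + d),
      3 ^ (p - 1) * (|F.q ξ t| ^ p + |F.q (ξ + d) t| ^ p + (B * d) ^ p) :=
    intervalIntegral.integral_mono_on_of_le_Ioo (by linarith)
      (F.intervalIntegrable_abs_q₀_rpow _ _)
      ((((hq _ _).add hshift).add intervalIntegrable_const).const_mul _)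
      fun ξ hξ => F.abs_q₀_rpow_le t hξ
  rw [intervalIntegral.integral_const_mul, intervalIntegral.integral_add ((hq _ _).add hshift)
    intervalIntegrable_const, intervalIntegral.integral_add (hq _ _) hshift,
    intervalIntegral.integral_comp_add_right (fun ξ => |F.q ξ t| ^ p),
    intervalIntegral.integral_add_adjacent_intervals (hq _ _) (hq _ _),
    intervalIntegral.integral_const, add_sub_cancel_left, smul_eq_mul] at hmono
  have hsub : ∫ ξ in (m : ℝ)..(m + d + d), |F.q ξ t| ^ p ≤ ∫ ξ in (m : ℝ)..(m + 1), |F.q ξ t| ^ p :=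
    intervalIntegral.integral_mono_interval le_rfl (by linarith) (by linarith)
      (ae_of_all _ fun ξ => F.density_nonneg ξ t) (hq _ _)
  have herror : d * (B * d) ^ p ≤ B ^ p * d ^ 2 := by
    rw [mul_rpow (F.slope_nonneg t) hd0.le, mul_left_comm, sq]
    have hdp : d ^ p ≤ d := rpow_le_self_of_le_one hd0.le (by linarith) (by linarith [F.two_le])
    have hB := rpow_nonneg (F.slope_nonneg t) p
    gcongr
  rw [← intervalIntegral.integral_add_adjacent_intervals
    (F.intervalIntegrable_abs_q₀_rpow m (m + d)) (F.intervalIntegrable_abs_q₀_rpow _ _),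
    hslot, add_zero]
  exact hmono.trans (mul_le_mul_of_nonneg_left (add_le_add hsub herror) (by positivity))

lemma integral_abs_q₀_rpow_le (t : ℝ) (n : ℕ) : ∫ ξ in (0 : ℝ)..n, |F.q₀ ξ| ^ p ≤
    3 ^ (p - 1) * ((∫ ξ in (0 : ℝ)..n, |F.q ξ t| ^ p) +
      F.slope t ^ p * ∑' m, fillLength m ^ 2) := by
  have hcells : ∀ h : ℝ → ℝ, (∀ a b, IntervalIntegrable h volume a b) →
      ∫ ξ in (0 : ℝ)..n, h ξ = ∑ m ∈ Finset.range n, ∫ ξ in (m : ℝ)..(m + 1), h ξ :=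
    fun h hh => by
      simpa using (intervalIntegral.sum_integral_adjacent_intervals (a := Nat.cast) (n := n)
        fun m _ => hh m (m + 1 : ℕ)).symm
  rw [hcells _ F.intervalIntegrable_abs_q₀_rpow, hcells _ (F.intervalIntegrable_density t)]
  refine (Finset.sum_le_sum fun m _ => F.integral_abs_q₀_rpow_cell_le t m).trans ?_
  rw [← Finset.mul_sum, Finset.sum_add_distrib, ← Finset.mul_sum]
  have hB := rpow_nonneg (F.slope_nonneg t) p
  have hsum := summable_fillLength_sq.sum_le_tsum (Finset.range n) fun m _ => sq_nonneg _
  gcongr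

/-- On a bounded time interval, characteristics with large labels are uniformly far to the right. -/
lemma exists_le_X (T r : ℝ) : ∃ n : ℕ, ∀ t, |t| ≤ T → r ≤ F.X n t := by
  obtain ⟨n, hn⟩ := (F.tendsto_integral.eventually_ge_atTop (3 ^ (p - 1) *
    (r + |v 0| * T + F.slope T ^ p * ∑' m, fillLength m ^ 2))).exists
  refine ⟨n, fun t ht => ?_⟩
  have hcell := hn.trans (F.integral_abs_q₀_rpow_le t n)
  have hpos : (0 : ℝ) < 3 ^ (p - 1) := by positivity
  have hslope : F.slope t ^ p * ∑' m, fillLength m ^ 2 ≤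
      F.slope T ^ p * ∑' m, fillLength m ^ 2 :=
    mul_le_mul_of_nonneg_right (rpow_le_rpow (F.slope_nonneg t)
      (F.slope_le_slope (ht.trans (le_abs_self T))) F.p_pos.le) (tsum_nonneg fun m => sq_nonneg _)
  have hdrift : -(|v 0| * T) ≤ v 0 * t := by
    refine (neg_le_neg ?_).trans (neg_abs_le _)
    rw [abs_mul]
    exact mul_le_mul_of_nonneg_left ht (abs_nonneg _)
  rw [X]
  linarith [le_of_mul_le_mul_left hcell hpos]

lemma tendsto_X_atTop (t : ℝ) : Tendsto (fun ξ => F.X ξ t) atTop atTop :=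
  tendsto_atTop_atTop_of_monotone (F.monotone_X t) fun r =>
    let ⟨n, hn⟩ := F.exists_le_X |t| r
    ⟨n, hn t le_rfl⟩

lemma tendsto_X_atBot (t : ℝ) : Tendsto (fun ξ => F.X ξ t) atBot atBot := by
  refine tendsto_atBot_mono' _ ?_ (tendsto_atBot_add_const_left _ (v 0 * t) tendsto_id)
  filter_upwards [eventually_le_atBot 0] with ξ hξ
  exact (F.X_of_nonpos hξ t).le

/-! ### Eulerian coordinates -/

/-- The smallest label at the position `y` at time `t`. -/
noncomputable def label (y t : ℝ) : ℝ := lowerInverse (fun ξ => F.X ξ t) y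

/-- The solution `u` in Eulerian coordinates. -/
noncomputable def solution (y t : ℝ) : ℝ := F.U (F.label y t) t

/-- The spatial derivative `u_x` of the solution; it has the junk value `0` where `q = 0`. -/
noncomputable def gradient (y t : ℝ) : ℝ := F.c (F.label y t) / F.q (F.label y t) t

lemma le_X_iff (y ξ t : ℝ) : y ≤ F.X ξ t ↔ F.label y t ≤ ξ :=
  le_iff_lowerInverse_le (F.continuous_X_left t) (F.monotone_X t) (F.tendsto_X_atTop t)
    (F.tendsto_X_atBot t) y ξ

lemma X_label (y t : ℝ) : F.X (F.label y t) t = y :=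
  apply_lowerInverse (F.continuous_X_left t) (F.monotone_X t) (F.tendsto_X_atTop t)
    (F.tendsto_X_atBot t) y

lemma measurable_label : Measurable fun z : ℝ × ℝ => F.label z.1 z.2 := by
  refine measurable_of_Iic fun ξ => ?_
  simp only [preimage, mem_Iic, ← le_X_iff]
  exact (isClosed_le continuous_fst
    (F.continuous_X.comp (continuous_const.prodMk continuous_snd))).measurableSet

lemma measurable_gradient : Measurable fun z : ℝ × ℝ => F.gradient z.1 z.2 :=
  (F.measurable_c.comp F.measurable_label).div
    (F.measurable_q.comp (F.measurable_label.prodMk measurable_snd))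

lemma measurable_gradient_left (t : ℝ) : Measurable fun y => F.gradient y t :=
  F.measurable_gradient.comp measurable_prodMk_right

lemma abs_W_le_density_rpow (ξ t : ℝ) : |F.W ξ t| ≤ (|F.q ξ t| ^ p) ^ (1 - p⁻¹) := by
  have hp := F.p_pos
  rw [W, LabelData.valueDensity, abs_mul, abs_oddPow F.two_le, ← rpow_mul (abs_nonneg _),
    mul_one_sub, mul_inv_cancel₀ hp.ne']
  exact mul_le_of_le_one_left (rpow_nonneg (abs_nonneg _) _) (F.abs_c_le ξ)

/-- Hölder's inequality in label coordinates, where `|∂U| ≤ |q|^{p-1}` and `∂X = |q|^p`. -/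
lemma abs_U_sub_le_rpow (ξ η t : ℝ) : |F.U η t - F.U ξ t| ≤
    |F.X η t - F.X ξ t| ^ (1 - p⁻¹) * |η - ξ| ^ p⁻¹ := by
  wlog h : ξ ≤ η generalizing ξ η
  · simpa only [abs_sub_comm] using this η ξ (le_of_not_ge h)
  have hp1 : 1 < p := by linarith [F.two_le]
  have hint := abs_integral_le_rpow_mul_rpow (θ := 1 - p⁻¹)
    (sub_pos.2 (inv_lt_one_of_one_lt₀ hp1)) (by linarith [inv_pos.2 F.p_pos]) h
    (fun y => F.density_nonneg y t) (F.intervalIntegrable_density t ξ η)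
    fun y => F.abs_W_le_density_rpow y t
  rwa [← U_sub, ← X_sub, sub_sub_cancel, ← abs_of_nonneg (sub_nonneg.2 (F.monotone_X t h)),
    ← abs_of_nonneg (sub_nonneg.2 h)] at hint

lemma U_eq_of_X_eq {ξ η t : ℝ} (h : F.X ξ t = F.X η t) : F.U ξ t = F.U η t := by
  have hp : 1 - p⁻¹ ≠ 0 :=
    (sub_pos.2 (inv_lt_one_of_one_lt₀ (by linarith [F.two_le] : 1 < p))).ne'
  have hU := F.abs_U_sub_le_rpow η ξ t
  rw [h, sub_self, abs_zero, zero_rpow hp, zero_mul] at hU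
  exact sub_eq_zero.1 (abs_nonpos_iff.1 hU)

lemma solution_X (ξ t : ℝ) : F.solution (F.X ξ t) t = F.U ξ t := F.U_eq_of_X_eq (F.X_label _ t)

/-- The passage from label to Eulerian coordinates of space-time. -/
noncomputable def toEulerian (z : ℝ × ℝ) : ℝ × ℝ := (F.X z.1 z.2, z.2)

lemma continuous_toEulerian : Continuous F.toEulerian := F.continuous_X.prodMk continuous_snd

lemma surjective_toEulerian : Function.Surjective F.toEulerian := fun z =>
  ⟨(F.label z.1 z.2, z.2), Prod.ext (F.X_label z.1 z.2) rfl⟩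

lemma exists_abs_label_le (T r : ℝ) : ∃ R, ∀ ξ t, |t| ≤ T → |F.X ξ t| ≤ r → |ξ| ≤ R := by
  obtain ⟨n, hn⟩ := F.exists_le_X T (r + 1)
  refine ⟨max n (r + |v 0| * T), fun ξ t ht hX => ?_⟩
  obtain ⟨hX₁, hX₂⟩ := abs_le.1 hX
  refine abs_le.2 ⟨?_, le_max_of_le_left ?_⟩
  · rcases le_total ξ 0 with hξ | hξ
    · rw [F.X_of_nonpos hξ] at hX₁
      have hdrift : v 0 * t ≤ |v 0| * T := (le_abs_self _).trans <| by
        rw [abs_mul]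
        exact mul_le_mul_of_nonneg_left ht (abs_nonneg _)
      linarith [le_max_right (n : ℝ) (r + |v 0| * T)]
    · exact (neg_nonpos.2 (le_max_of_le_left (Nat.cast_nonneg n))).trans hξ
  · exact ((F.monotone_X t).reflect_lt (show F.X ξ t < F.X n t by linarith [hn t ht])).le

lemma isProperMap_toEulerian : IsProperMap F.toEulerian := by
  refine isProperMap_iff_isCompact_preimage.2 ⟨F.continuous_toEulerian, fun K hK => ?_⟩
  obtain ⟨r, hr⟩ := hK.isBounded.exists_norm_le
  obtain ⟨R, hR⟩ := F.exists_abs_label_le r r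
  refine (isCompact_closedBall (0 : ℝ × ℝ) (max R r)).of_isClosed_subset
    (hK.isClosed.preimage F.continuous_toEulerian) fun z hz => ?_
  have hz' := hr _ hz
  have ht : |z.2| ≤ r := (norm_snd_le _).trans hz'
  rw [mem_closedBall_zero_iff]
  exact max_le_max (hR z.1 z.2 ht ((norm_fst_le _).trans hz')) ht

lemma continuous_solution : Continuous fun z : ℝ × ℝ => F.solution z.1 z.2 := by
  have hq : IsQuotientMap F.toEulerian := F.isProperMap_toEulerian.isClosedMap.isQuotientMap
    F.continuous_toEulerian F.surjective_toEulerian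
  refine hq.continuous_iff.2 ?_
  simpa only [Function.comp_def, toEulerian, solution_X] using F.continuous_U

lemma solution_zero {t : ℝ} (ht : 0 ≤ v 0 * t) : F.solution 0 t = 0 := by
  refine F.U_of_nonpos ((F.le_X_iff 0 0 t).1 ?_) t
  rwa [F.X_of_nonpos le_rfl, add_zero]

lemma solution_initial {g : ℝ → ℝ} (hg : ∀ ξ, ∫ η in (0 : ℝ)..ξ, F.c η * oddPow p (F.q₀ η) =
    ∫ y in (0 : ℝ)..∫ η in (0 : ℝ)..ξ, |F.q₀ η| ^ p, g y) (y : ℝ) :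
    F.solution y 0 = ∫ x in (0 : ℝ)..y, g x := by
  have hq : ∀ ξ, F.q ξ 0 = F.q₀ ξ := fun ξ => by
    simp [q, LabelData.stretch, F.a_eq ξ 0]
  have hX : ∫ η in (0 : ℝ)..F.label y 0, |F.q₀ η| ^ p = y := by
    have := F.X_label y 0
    rw [X, mul_zero, zero_add] at this
    simpa only [hq] using this
  rw [← hX, ← hg, hX]
  exact intervalIntegral.integral_congr fun ξ _ => by
    change F.c ξ * oddPow p (F.q ξ 0) = _
    rw [hq]

/-! ### Joint Hölder continuity -/

lemma abs_W_sub_le {s t T : ℝ} (hs : |s| ≤ T) (ht : |t| ≤ T) (ξ : ℝ) :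
    |F.W ξ t - F.W ξ s| ≤ F.M * F.R T ^ (p - 2) * |t - s| := by
  refine (convex_Icc (-T) T).norm_image_sub_le_of_norm_hasDerivWithin_le
    (fun τ _ => (F.hasDerivAt_W ξ τ).hasDerivWithinAt) (fun τ hτ => ?_) (abs_le.1 hs) (abs_le.1 ht)
  have hR : F.R τ ^ (p - 2) ≤ F.R T ^ (p - 2) :=
    rpow_le_rpow (zero_le_one.trans (F.one_le_R τ))
      (F.R_le_R ((abs_le.2 hτ).trans (le_abs_self T))) (by linarith [F.two_le])
  exact (F.abs_Wt_le ξ τ).trans (mul_le_mul_of_nonneg_left hR F.M_nonneg)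

lemma abs_U_sub_le_time {s t T : ℝ} (hs : |s| ≤ T) (ht : |t| ≤ T) (ξ : ℝ) :
    |F.U ξ t - F.U ξ s| ≤ F.M * F.R T ^ (p - 2) * |ξ| * |t - s| := by
  have hsub : F.U ξ t - F.U ξ s = ∫ η in (0 : ℝ)..ξ, (F.W η t - F.W η s) :=
    (intervalIntegral.integral_sub (F.intervalIntegrable_W t 0 ξ)
      (F.intervalIntegrable_W s 0 ξ)).symm
  rw [hsub, mul_right_comm]
  simpa using intervalIntegral.norm_integral_le_of_norm_le_const (a := 0) (b := ξ)
    (f := fun η => F.W η t - F.W η s) fun η _ => F.abs_W_sub_le hs ht η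

lemma abs_X_sub_le_time {s t T : ℝ} (hs : |s| ≤ T) (ht : |t| ≤ T) (ξ : ℝ) :
    |F.X ξ t - F.X ξ s| ≤ (|v 0| + F.M * (F.R T ^ (p - 1) * |ξ|)) * |t - s| := by
  refine (convex_Icc (-T) T).norm_image_sub_le_of_norm_hasDerivWithin_le
    (fun τ _ => (F.hasDerivAt_X ξ τ).hasDerivWithinAt) (fun τ hτ => ?_) (abs_le.1 hs) (abs_le.1 ht)
  have hU : |F.U ξ τ| ≤ F.R T ^ (p - 1) * |ξ| := by
    have hR := F.R_rpow_le_R_rpow ((abs_le.2 hτ).trans (le_abs_self T))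
    have hlip := F.abs_U_sub_le 0 ξ τ
    rw [U_zero, sub_zero, sub_zero] at hlip
    exact hlip.trans (mul_le_mul_of_nonneg_right hR (abs_nonneg ξ))
  have hv := F.abs_speed_sub_le (F.U ξ τ) 0
  rw [sub_zero] at hv
  calc |v (F.U ξ τ)| ≤ |v 0| + |v (F.U ξ τ) - v 0| := by
        simpa using abs_add_le (v 0) (v (F.U ξ τ) - v 0)
    _ ≤ _ := add_le_add_right (hv.trans (mul_le_mul_of_nonneg_left hU F.M_nonneg)) _

lemma exists_abs_sub_le_time (T r : ℝ) : ∃ B, 0 ≤ B ∧ ∀ ξ s t, |ξ| ≤ r → |s| ≤ T → |t| ≤ T →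
    |F.U ξ t - F.U ξ s| ≤ B * |t - s| ∧ |F.X ξ t - F.X ξ s| ≤ B * |t - s| := by
  have hM := F.M_nonneg
  have hR := zero_le_one.trans (F.one_le_R T)
  refine ⟨F.M * F.R T ^ (p - 2) * |r| + (|v 0| + F.M * (F.R T ^ (p - 1) * |r|)), by positivity,
    fun ξ s t hξ hs ht => ⟨(F.abs_U_sub_le_time hs ht ξ).trans ?_,
      (F.abs_X_sub_le_time hs ht ξ).trans ?_⟩⟩ <;>
  have hr := hξ.trans (le_abs_self r) <;>
  gcongr ?_ * |t - s|
  · refine le_add_of_le_of_nonneg ?_ (by positivity)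
    gcongr
  · refine le_add_of_nonneg_of_le (by positivity) ?_
    gcongr

/-- Move along the characteristic through the first point to the second time, where `U` and `X` are
Lipschitz, and use Hölder's inequality there. -/
lemma abs_solution_sub_le {B r : ℝ} {z w : ℝ × ℝ} (hz : |F.label z.1 z.2| ≤ r)
    (hw : |F.label w.1 w.2| ≤ r)
    (hU : |F.U (F.label z.1 z.2) z.2 - F.U (F.label z.1 z.2) w.2| ≤ B * |z.2 - w.2|)
    (hX : |F.X (F.label z.1 z.2) z.2 - F.X (F.label z.1 z.2) w.2| ≤ B * |z.2 - w.2|) :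
    |F.solution z.1 z.2 - F.solution w.1 w.2| ≤ B * |z.2 - w.2| +
      (|z.1 - w.1| + B * |z.2 - w.2|) ^ (1 - p⁻¹) * (2 * r) ^ p⁻¹ := by
  set ξ := F.label z.1 z.2
  set η := F.label w.1 w.2
  have hp := inv_pos.2 F.p_pos
  have hp1 : 0 ≤ 1 - p⁻¹ := sub_nonneg.2 F.inv_p_le_one
  have hdist : |F.X ξ w.2 - F.X η w.2| ≤ |z.1 - w.1| + B * |z.2 - w.2| := by
    have hsplit : F.X ξ w.2 - F.X η w.2 = (z.1 - w.1) - (F.X ξ z.2 - F.X ξ w.2) := by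
      rw [F.X_label z.1 z.2, F.X_label w.1 w.2]
      ring
    rw [hsplit]
    exact (abs_sub _ _).trans (add_le_add_right hX _)
  have hbase : 0 ≤ |z.1 - w.1| + B * |z.2 - w.2| := (abs_nonneg _).trans hdist
  calc _ ≤ |F.U ξ z.2 - F.U ξ w.2| + |F.U ξ w.2 - F.U η w.2| := abs_sub_le _ _ _
    _ ≤ B * |z.2 - w.2| + |F.X ξ w.2 - F.X η w.2| ^ (1 - p⁻¹) * |ξ - η| ^ p⁻¹ :=
      add_le_add hU (F.abs_U_sub_le_rpow η ξ w.2)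
    _ ≤ _ := by
      gcongr
      linarith [abs_sub ξ η]

lemma exists_abs_solution_sub_le {K : Set (ℝ × ℝ)} (hK : IsCompact K) :
    ∃ C : ℝ, ∀ z ∈ K, ∀ w ∈ K, |F.solution z.1 z.2 - F.solution w.1 w.2| ≤
      C * (|z.1 - w.1| + |z.2 - w.2|) ^ (1 - p⁻¹) := by
  obtain ⟨T, hT⟩ := hK.isBounded.exists_norm_le
  obtain ⟨r, hr⟩ := F.exists_abs_label_le T T
  obtain ⟨B, hB, htime⟩ := F.exists_abs_sub_le_time T r
  have hbound : ∀ z ∈ K, |z.2| ≤ T ∧ |z.1| ≤ T ∧ |F.label z.1 z.2| ≤ r := fun z hz =>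
    have ht := (norm_snd_le z).trans (hT z hz)
    have hy := (norm_fst_le z).trans (hT z hz)
    ⟨ht, hy, hr _ _ ht (by rwa [X_label])⟩
  refine ⟨B * (4 * T) ^ p⁻¹ + (B + 1) ^ (1 - p⁻¹) * (2 * r) ^ p⁻¹, fun z hz w hw => ?_⟩
  obtain ⟨ht₁, hy₁, hξ⟩ := hbound z hz
  obtain ⟨ht₂, hy₂, hη⟩ := hbound w hw
  obtain ⟨hU, hX⟩ := htime _ w.2 z.2 hξ ht₂ ht₁
  set D := |z.1 - w.1| + |z.2 - w.2|
  have hD0 : 0 ≤ D := by positivity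
  have hDT : D ≤ 4 * T := by linarith [abs_sub z.1 w.1, abs_sub z.2 w.2]
  have hp := inv_pos.2 F.p_pos
  have hp1 : 0 ≤ 1 - p⁻¹ := sub_nonneg.2 F.inv_p_le_one
  have hspace : |z.1 - w.1| + B * |z.2 - w.2| ≤ (B + 1) * D := by
    linarith [abs_nonneg (z.2 - w.2), mul_nonneg hB (abs_nonneg (z.1 - w.1))]
  have hinterp : D ≤ (4 * T) ^ p⁻¹ * D ^ (1 - p⁻¹) :=
    calc D = D ^ p⁻¹ * D ^ (1 - p⁻¹) := by
          rw [← rpow_add_of_nonneg hD0 hp.le hp1, add_sub_cancel, rpow_one]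
      _ ≤ _ := by gcongr
  have hr0 : 0 ≤ r := (abs_nonneg _).trans hξ
  calc _ ≤ B * |z.2 - w.2| + (|z.1 - w.1| + B * |z.2 - w.2|) ^ (1 - p⁻¹) * (2 * r) ^ p⁻¹ :=
        F.abs_solution_sub_le hξ hη hU hX
    _ ≤ B * ((4 * T) ^ p⁻¹ * D ^ (1 - p⁻¹)) + ((B + 1) * D) ^ (1 - p⁻¹) * (2 * r) ^ p⁻¹ := by
        gcongr
        exact (le_add_of_nonneg_left (abs_nonneg _)).trans hinterp
    _ = _ := by
        rw [mul_rpow (by positivity) hD0]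
        ring

/-! ### The spatial derivative -/

lemma transportsDensity (t : ℝ) :
    TransportsDensity (fun ξ => |F.q ξ t| ^ p) (fun ξ => F.X ξ t) volume volume :=
  transportsDensity_of_sub_eq_integral (F.measurable_density_left t)
    (fun ξ => F.density_nonneg ξ t) (F.intervalIntegrable_density t) (fun ξ η => F.X_sub t ξ η)
    (F.continuous_X_left t) (F.tendsto_X_atTop t) (F.tendsto_X_atBot t)

lemma ae_label_X (t : ℝ) : ∀ᵐ ξ, F.q ξ t ≠ 0 → F.label (F.X ξ t) t = ξ := by
  filter_upwards [ae_lowerInverse_apply (F.transportsDensity t) (F.continuous_X_left t)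
    (F.monotone_X t) (F.tendsto_X_atTop t) (F.tendsto_X_atBot t)] with ξ hξ hq
  exact hξ (rpow_pos_of_pos (abs_pos.2 hq) p).ne'

lemma density_mul_gradient {ξ t : ℝ} (h : F.q ξ t ≠ 0 → F.label (F.X ξ t) t = ξ) :
    |F.q ξ t| ^ p * F.gradient (F.X ξ t) t = F.W ξ t := by
  rw [W, LabelData.valueDensity, ← q, ← oddPow_mul_self F.two_le]
  by_cases hq : F.q ξ t = 0
  · simp [hq, oddPow]
  · rw [gradient, h hq]
    field_simp

lemma density_mul_abs_gradient_rpow_le {ξ t : ℝ} (h : F.q ξ t ≠ 0 → F.label (F.X ξ t) t = ξ) :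
    |F.q ξ t| ^ p * |F.gradient (F.X ξ t) t| ^ p ≤ 1 := by
  have hp := F.p_pos
  by_cases hq : F.q ξ t = 0
  · simp [hq, zero_rpow hp.ne']
  · rw [gradient, h hq, ← mul_rpow (abs_nonneg _) (abs_nonneg _), ← abs_mul,
      mul_div_cancel₀ _ hq]
    exact rpow_le_one (abs_nonneg _) (F.abs_c_le ξ) hp.le

lemma preimage_X_Ico (a b t : ℝ) :
    (fun ξ => F.X ξ t) ⁻¹' Ico a b = Ico (F.label a t) (F.label b t) := by
  ext ξ
  simp only [mem_preimage, mem_Ico, ← not_le, le_X_iff]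

lemma transportsDensity_Ico (a b t : ℝ) : TransportsDensity (fun ξ => |F.q ξ t| ^ p)
    (fun ξ => F.X ξ t) (volume.restrict (Ico (F.label a t) (F.label b t)))
    (volume.restrict (Ico a b)) := by
  rw [← preimage_X_Ico]
  exact (F.transportsDensity t).restrict measurableSet_Ico

lemma label_le_label {a b : ℝ} (hab : a ≤ b) (t : ℝ) : F.label a t ≤ F.label b t := by
  rwa [← le_X_iff, X_label]

lemma intervalIntegrable_gradient {a b : ℝ} (hab : a ≤ b) (t : ℝ) :
    IntervalIntegrable (fun y => F.gradient y t) volume a b := by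
  rw [intervalIntegrable_iff_integrableOn_Ico_of_le hab, IntegrableOn,
    (F.transportsDensity_Ico a b t).integrable_iff (F.measurable_gradient_left t)]
  refine ((intervalIntegrable_iff_integrableOn_Ico_of_le (F.label_le_label hab t)).1
    (F.intervalIntegrable_W t _ _)).congr (ae_restrict_of_ae ?_)
  filter_upwards [F.ae_label_X t] with ξ hξ
  exact (F.density_mul_gradient hξ).symm

lemma integral_gradient {a b : ℝ} (hab : a ≤ b) (t : ℝ) :
    ∫ y in a..b, F.gradient y t = F.solution b t - F.solution a t := by
  rw [solution, solution, U_sub, intervalIntegral.integral_of_le hab,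
    intervalIntegral.integral_of_le (F.label_le_label hab t), ← integral_Ico_eq_integral_Ioc,
    ← integral_Ico_eq_integral_Ioc,
    (F.transportsDensity_Ico a b t).integral_eq (F.measurable_gradient_left t)]
  refine integral_congr_ae (ae_restrict_of_ae ?_)
  filter_upwards [F.ae_label_X t] with ξ hξ
  exact F.density_mul_gradient hξ

lemma integrableOn_abs_gradient_rpow (a b t : ℝ) :
    IntegrableOn (fun y => |F.gradient y t| ^ p) (Icc a b) := by
  have hmeas : Measurable fun y => |F.gradient y t| ^ p :=
    (continuous_abs_rpow F.two_le).measurable.comp (F.measurable_gradient_left t)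
  rw [integrableOn_Icc_iff_integrableOn_Ico, IntegrableOn,
    (F.transportsDensity_Ico a b t).integrable_iff hmeas]
  refine (integrable_const (1 : ℝ)).mono' ((F.measurable_density_left t).mul
    (hmeas.comp (F.continuous_X_left t).measurable)).aestronglyMeasurable (ae_restrict_of_ae ?_)
  filter_upwards [F.ae_label_X t] with ξ hξ
  rw [norm_of_nonneg (mul_nonneg (F.density_nonneg ξ t) (rpow_nonneg (abs_nonneg _) _))]
  exact F.density_mul_abs_gradient_rpow_le hξ

end LagrangianFlow

/-! ### The weak formulation -/

lemma countable_zeros_of_deriv_ne_zero {E : Type*} [NormedAddCommGroup E] [NormedSpace ℝ E]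
    {f f' : ℝ → E} (hf : ∀ t, HasDerivAt f (f' t) t) : {t | f t = 0 ∧ f' t ≠ 0}.Countable := by
  refine Countable.mono (fun t ht => ?_)
    (countable_setOfPred_isolated_right_within (s := {t | f t = 0 ∧ f' t ≠ 0}))
  refine ⟨ht, ?_⟩
  have hne : ∀ᶠ s in 𝓝[{t | f t = 0 ∧ f' t ≠ 0} ∩ Ioi t] t, f s ≠ 0 :=
    ((hf t).eventually_ne (c := 0) ht.2).filter_mono
      (nhdsWithin_mono t fun s hs => (ne_of_gt hs.2 : s ≠ t))
  rw [← empty_mem_iff_bot]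
  filter_upwards [hne, self_mem_nhdsWithin] with s hs hmem
  exact hs hmem.1.1

lemma integrable_mul_of_hasCompactSupport {α : Type*} [TopologicalSpace α] [MeasurableSpace α]
    [BorelSpace α] {μ : Measure α} [IsFiniteMeasureOnCompacts μ] {g b h : α → ℝ}
    (hg : Measurable g) (hb : Continuous b) (hgb : ∀ z, |g z| ≤ b z) (hh : Continuous h)
    (hsupp : HasCompactSupport h) : Integrable (fun z => g z * h z) μ := by
  refine ((hb.mul hh).integrable_of_hasCompactSupport hsupp.mul_left).mono
    (hg.mul hh.measurable).aestronglyMeasurable (ae_of_all _ fun z => ?_)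
  rw [norm_mul, Pi.mul_apply, norm_mul]
  exact mul_le_mul_of_nonneg_right ((hgb z).trans (le_abs_self _)) (norm_nonneg _)

lemma hasCompactSupport_comp_of_isProperMap {α β : Type*} [TopologicalSpace α] [R1Space α]
    [TopologicalSpace β] {f : α → β} (hf : IsProperMap f) {g : β → ℝ} (hg : HasCompactSupport g) :
    HasCompactSupport (g ∘ f) :=
  .intro (hf.isCompact_preimage hg) fun z hz =>
    image_eq_zero_of_notMem_tsupport (f := g) (x := f z) hz

lemma continuous_px {φ : ℝ × ℝ → ℝ} (hφ : ContDiff ℝ 1 φ) : Continuous (px φ) :=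
  (hφ.continuous_fderiv one_ne_zero).clm_apply continuous_const

lemma continuous_pt {φ : ℝ × ℝ → ℝ} (hφ : ContDiff ℝ 1 φ) : Continuous (pt φ) :=
  (hφ.continuous_fderiv one_ne_zero).clm_apply continuous_const

namespace LagrangianFlow

variable {p : ℝ} {v : ℝ → ℝ} (F : LagrangianFlow p v)

include F in
lemma continuous_speed : Continuous v := F.differentiable_speed.continuous

lemma transportsDensity_toEulerian :
    TransportsDensity (fun z : ℝ × ℝ => |F.q z.1 z.2| ^ p) F.toEulerian volume volume := by
  rw [Measure.volume_eq_prod]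
  exact .prod F.measurable_density F.continuous_X.measurable F.transportsDensity

lemma ae_label_toEulerian :
    ∀ᵐ z : ℝ × ℝ, F.q z.1 z.2 ≠ 0 → F.label (F.X z.1 z.2) z.2 = z.1 := by
  have hmeas : MeasurableSet
      {z : ℝ × ℝ | F.q z.1 z.2 ≠ 0 → F.label (F.X z.1 z.2) z.2 = z.1} :=
    (measurableSet_eq_fun F.measurable_q measurable_const).compl.imp
      (measurableSet_eq_fun (F.measurable_label.comp F.continuous_toEulerian.measurable)
        measurable_fst)
  rw [Measure.volume_eq_prod, Measure.ae_prod_iff_ae_ae hmeas,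
    Measure.ae_ae_comm (p := fun ξ t => F.q ξ t ≠ 0 → F.label (F.X ξ t) t = ξ) hmeas]
  exact ae_of_all _ F.ae_label_X

/-- A stretch vanishes transversally, hence at countably many times, unless its rate of change
vanishes as well. -/
lemma ae_deriv_q_eq_zero :
    ∀ᵐ z : ℝ × ℝ, F.q z.1 z.2 = 0 → F.c z.1 * (p⁻¹ * deriv v (F.U z.1 z.2)) = 0 := by
  have hderiv : Measurable fun z : ℝ × ℝ => F.c z.1 * (p⁻¹ * deriv v (F.U z.1 z.2)) :=
    (F.measurable_c.comp measurable_fst).mul (measurable_const.mul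
      (F.continuous_deriv_speed.comp F.continuous_U).measurable)
  have hmeas : MeasurableSet
      {z : ℝ × ℝ | F.q z.1 z.2 = 0 → F.c z.1 * (p⁻¹ * deriv v (F.U z.1 z.2)) = 0} :=
    (measurableSet_eq_fun F.measurable_q measurable_const).imp
      (measurableSet_eq_fun hderiv measurable_const)
  rw [Measure.volume_eq_prod, Measure.ae_prod_iff_ae_ae hmeas]
  refine ae_of_all _ fun ξ => ?_
  filter_upwards [(countable_zeros_of_deriv_ne_zero (F.hasDerivAt_q ξ)).ae_notMem volume]
    with t ht hq
  exact not_not.1 fun hne => ht ⟨hq, hne⟩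

/-- The derivative of a test function along the characteristics. -/
noncomputable def materialDeriv (φ : ℝ × ℝ → ℝ) (z : ℝ × ℝ) : ℝ :=
  pt φ (F.toEulerian z) + v (F.U z.1 z.2) * px φ (F.toEulerian z)

section TestFunction

variable {φ : ℝ × ℝ → ℝ}

lemma hasDerivAt_comp_toEulerian (hφ : ContDiff ℝ 1 φ) (ξ t : ℝ) :
    HasDerivAt (fun t => φ (F.toEulerian (ξ, t))) (F.materialDeriv φ (ξ, t)) t := by
  have hpath : HasDerivAt (fun t => F.toEulerian (ξ, t)) (v (F.U ξ t), 1) t :=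
    (F.hasDerivAt_X ξ t).prodMk (hasDerivAt_id t)
  refine ((hφ.differentiable one_ne_zero _).hasFDerivAt.comp_hasDerivAt t hpath).congr_deriv ?_
  have hdir : ((v (F.U ξ t), 1) : ℝ × ℝ) = (0, 1) + v (F.U ξ t) • (1, 0) := by simp
  rw [hdir, map_add, map_smul]
  rfl

lemma continuous_materialDeriv (hφ : ContDiff ℝ 1 φ) : Continuous (F.materialDeriv φ) :=
  ((continuous_pt hφ).comp F.continuous_toEulerian).add
    ((F.continuous_speed.comp F.continuous_U).mul
      ((continuous_px hφ).comp F.continuous_toEulerian))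

lemma hasCompactSupport_materialDeriv (hφ : HasCompactSupport φ) :
    HasCompactSupport (F.materialDeriv φ) :=
  (hasCompactSupport_comp_of_isProperMap F.isProperMap_toEulerian (hφ.fderiv_apply ℝ _)).add
    (hasCompactSupport_comp_of_isProperMap F.isProperMap_toEulerian
      (hφ.fderiv_apply ℝ _)).mul_left

lemma integrable_W_mul {h : ℝ × ℝ → ℝ} (hh : Continuous h) (hsupp : HasCompactSupport h) :
    Integrable fun z => F.W z.1 z.2 * h z :=
  integrable_mul_of_hasCompactSupport F.measurable_W
    (b := fun z => F.R z.2 ^ (p - 1))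
    ((F.continuous_R.comp continuous_snd).rpow_const fun _ => Or.inr (by linarith [F.two_le]))
    (fun z => F.abs_W_le z.1 z.2) hh hsupp

lemma integrable_Wt_mul {h : ℝ × ℝ → ℝ} (hh : Continuous h) (hsupp : HasCompactSupport h) :
    Integrable fun z => F.Wt z.1 z.2 * h z :=
  integrable_mul_of_hasCompactSupport F.measurable_Wt
    (b := fun z => F.M * F.R z.2 ^ (p - 2))
    (continuous_const.mul ((F.continuous_R.comp continuous_snd).rpow_const
      fun _ => Or.inr (by linarith [F.two_le])))
    (fun z => F.abs_Wt_le z.1 z.2) hh hsupp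

lemma integral_lagrangian_eq_zero (hφ : ContDiff ℝ 1 φ) (hφc : HasCompactSupport φ) :
    ∫ z : ℝ × ℝ, (F.Wt z.1 z.2 * φ (F.toEulerian z) + F.W z.1 z.2 * F.materialDeriv φ z) = 0 := by
  have hcont : Continuous fun z => φ (F.toEulerian z) :=
    hφ.continuous.comp F.continuous_toEulerian
  have hsupp : HasCompactSupport fun z => φ (F.toEulerian z) :=
    hasCompactSupport_comp_of_isProperMap F.isProperMap_toEulerian hφc
  have hprod := F.integrable_W_mul hcont hsupp
  have hderiv := (F.integrable_Wt_mul hcont hsupp).add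
    (F.integrable_W_mul (F.continuous_materialDeriv hφ) (F.hasCompactSupport_materialDeriv hφc))
  rw [Measure.volume_eq_prod] at hprod hderiv ⊢
  refine (integral_prod _ hderiv).trans ?_
  refine integral_eq_zero_of_ae ?_
  filter_upwards [hprod.prod_right_ae, hderiv.prod_right_ae] with ξ hprodξ hderivξ
  exact integral_eq_zero_of_hasDerivAt_of_integrable
    (fun t => (F.hasDerivAt_W ξ t).mul (F.hasDerivAt_comp_toEulerian hφ ξ t)) hderivξ hprodξ

lemma density_mul_gradient_sq {ξ t : ℝ} (h : F.q ξ t ≠ 0 → F.label (F.X ξ t) t = ξ)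
    (h0 : F.q ξ t = 0 → F.c ξ * (p⁻¹ * deriv v (F.U ξ t)) = 0) :
    |F.q ξ t| ^ p * ((1 - p⁻¹) * deriv v (F.U ξ t) * F.gradient (F.X ξ t) t ^ 2) = F.Wt ξ t := by
  have hp := F.p_pos
  by_cases hq : F.q ξ t = 0
  · have hcv : F.c ξ * deriv v (F.U ξ t) = 0 := by
      simpa [mul_left_comm, hp.ne'] using h0 hq
    rw [Wt, hq, abs_zero, zero_rpow hp.ne', zero_mul]
    linear_combination (-(1 - p⁻¹) * F.c ξ * 0 ^ (p - 2)) * hcv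
  · have hpow : |F.q ξ t| ^ p = |F.q ξ t| ^ (p - 2) * F.q ξ t ^ 2 := by
      rw [← oddPow_mul_self F.two_le, oddPow, mul_assoc, sq]
    rw [gradient, h hq, hpow, Wt]
    field_simp

lemma measurable_weakIntegrand (hφ : ContDiff ℝ 1 φ) : Measurable fun z : ℝ × ℝ =>
    -(F.gradient z.1 z.2) * (pt φ z + v (F.solution z.1 z.2) * px φ z) +
      (p⁻¹ - 1) * deriv v (F.solution z.1 z.2) * F.gradient z.1 z.2 ^ 2 * φ z := by
  have hgrad := F.measurable_gradient
  have hv := (F.continuous_speed.comp F.continuous_solution).measurable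
  have hv' := (F.continuous_deriv_speed.comp F.continuous_solution).measurable
  have hpt := (continuous_pt hφ).measurable
  have hpx := (continuous_px hφ).measurable
  have hφm := hφ.continuous.measurable
  exact (hgrad.neg.mul (hpt.add (hv.mul hpx))).add
    (((measurable_const.mul hv').mul (hgrad.pow_const 2)).mul hφm)

/-- In label coordinates the weak formulation says that the time derivative of `W φ(X, t)` has
integral zero. -/
theorem integral_weak_eq_zero (hφ : ContDiff ℝ 1 φ) (hφc : HasCompactSupport φ) :
    ∫ z : ℝ × ℝ, (-(F.gradient z.1 z.2) * (pt φ z + v (F.solution z.1 z.2) * px φ z) +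
      (p⁻¹ - 1) * deriv v (F.solution z.1 z.2) * F.gradient z.1 z.2 ^ 2 * φ z) = 0 := by
  rw [F.transportsDensity_toEulerian.integral_eq (F.measurable_weakIntegrand hφ), ← neg_zero,
    ← F.integral_lagrangian_eq_zero hφ hφc, ← integral_neg]
  refine integral_congr_ae ?_
  filter_upwards [F.ae_label_toEulerian, F.ae_deriv_q_eq_zero] with z hlabel hzero
  have hW := F.density_mul_gradient hlabel
  have hWt := F.density_mul_gradient_sq hlabel hzero
  simp only [materialDeriv, toEulerian, solution_X]
  linear_combination
    (-(pt φ (F.X z.1 z.2, z.2) + v (F.U z.1 z.2) * px φ (F.X z.1 z.2, z.2))) * hW -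
      φ (F.X z.1 z.2, z.2) * hWt

end TestFunction

end LagrangianFlow

lemma LagrangianFlow.setIntegral_weak_eq_zero {p : ℝ} {v : ℝ → ℝ} (F : LagrangianFlow p v)
    {φ : ℝ × ℝ → ℝ} (hφ : ContDiff ℝ 1 φ) (hφc : HasCompactSupport φ) {s : Set (ℝ × ℝ)}
    (hs : tsupport φ ⊆ s) :
    ∫ z in s, (-(F.gradient z.1 z.2) * (pt φ z + v (F.solution z.1 z.2) * px φ z) +
      (p⁻¹ - 1) * deriv v (F.solution z.1 z.2) * F.gradient z.1 z.2 ^ 2 * φ z) = 0 := by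
  rw [setIntegral_eq_integral_of_forall_compl_eq_zero, F.integral_weak_eq_zero hφ hφc]
  intro z hz
  have hzφ : z ∉ tsupport φ := fun h => hz (hs h)
  have hfderiv : fderiv ℝ φ z = 0 :=
    image_eq_zero_of_notMem_tsupport fun h => hzφ (tsupport_fderiv_subset ℝ h)
  simp [px, pt, hfderiv, image_eq_zero_of_notMem_tsupport hzφ]

lemma intervalIntegrable_indicator_Ioi {g : ℝ → ℝ}
    (hg : ∀ b : ℝ, 0 < b → IntegrableOn g (Icc 0 b)) (a b : ℝ) :
    IntervalIntegrable ((Ioi 0).indicator g) volume a b := by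
  have hb : 0 < max (max a b) 1 := zero_lt_one.trans_le (le_max_right _ _)
  rw [intervalIntegrable_iff, IntegrableOn, integrable_indicator_iff measurableSet_Ioi,
    IntegrableOn, Measure.restrict_restrict measurableSet_Ioi]
  exact (hg _ hb).mono_set fun x hx => ⟨hx.1.le, hx.2.2.trans (le_max_left _ _)⟩

lemma exists_lagrangianFlow {p : ℝ} (hp : 2 ≤ p) {v : ℝ → ℝ} (hv : Differentiable ℝ v) {M L : ℝ}
    (hM : ∀ x, |deriv v x| ≤ M) (hL : ∀ a b, |deriv v a - deriv v b| ≤ L * |a - b|) {g : ℝ → ℝ}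
    (hg : ∀ b : ℝ, 0 < b → IntegrableOn g (Icc 0 b))
    (hgp : ∀ b : ℝ, 0 < b → IntegrableOn (fun x => |g x| ^ p) (Icc 0 b)) :
    ∃ F : LagrangianFlow p v, ∀ x, 0 ≤ x → F.solution x 0 = ∫ y in (0 : ℝ)..x, g y := by
  have hlip : LipschitzWith L.toNNReal (deriv v) :=
    .of_dist_le' fun a b => by simpa only [dist_eq] using hL a b
  have hpow : ∀ x, |(Ioi 0).indicator g x| ^ p = (Ioi 0).indicator (fun x => |g x| ^ p) x :=
    fun x => by
      have hp0 : p ≠ 0 := by linarith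
      by_cases hx : x ∈ Ioi (0 : ℝ) <;> simp [hx, hp0]
  obtain ⟨D, hD⟩ := exists_labelData hp (g := (Ioi 0).indicator g)
    (fun x hx => indicator_of_notMem hx.not_gt g) (intervalIntegrable_indicator_Ioi hg)
    (by simpa only [hpow] using intervalIntegrable_indicator_Ioi hgp)
  obtain ⟨a, ha, hpicard⟩ := D.exists_field hM hlip
  refine ⟨⟨D, M, L.toNNReal, hv, hM, hlip, a, ha, hpicard⟩, fun x hx => ?_⟩
  rw [LagrangianFlow.solution_initial _ hD]
  refine intervalIntegral.integral_congr_ae (ae_of_all _ fun y hy => indicator_of_mem ?_ g)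
  exact (uIoc_of_le hx ▸ hy).1

end HunterSaxton

theorem stmt1_general (lam : ℝ) (hlam : 0 < lam) (hlam' : lam ≤ 1 / 2)
    (f : ℝ → ℝ) (hf : ContDiff ℝ 2 f) (hf0 : 0 ≤ deriv f 0)
    (hfLip : ∃ L : ℝ, ∀ a b : ℝ, |deriv (deriv f) a - deriv (deriv f) b| ≤ L * |a - b|)
    (hfbd : ∃ M : ℝ, ∀ a : ℝ, |deriv (deriv f) a| ≤ M)
    (u₀ g₀ : ℝ → ℝ)
    (hg₀int : ∀ b : ℝ, 0 < b → IntervalIntegrable g₀ volume 0 b)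
    (hu₀AC : ∀ x : ℝ, 0 ≤ x → u₀ x = ∫ y in (0:ℝ)..x, g₀ y)
    (hu₀W : ∀ b : ℝ, 0 < b → IntegrableOn (fun x => |g₀ x| ^ (1/lam)) (Icc 0 b)) :
    ∃ u ux : ℝ → ℝ → ℝ,
      ContinuousOn (fun p : ℝ × ℝ => u p.1 p.2) (Ici 0 ×ˢ Ici 0) ∧
      (∀ t : ℝ, 0 ≤ t → u 0 t = 0) ∧
      (∀ x : ℝ, 0 ≤ x → u x 0 = u₀ x) ∧
      (∀ t : ℝ, 0 ≤ t →
        (∀ b : ℝ, 0 < b → IntervalIntegrable (fun y => ux y t) volume 0 b) ∧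
        (∀ x : ℝ, 0 ≤ x → u x t = ∫ y in (0:ℝ)..x, ux y t) ∧
        (∀ b : ℝ, 0 < b → IntegrableOn (fun x => |ux x t| ^ (1/lam)) (Icc 0 b))) ∧
      (∀ φ : ℝ × ℝ → ℝ, ContDiff ℝ 1 φ → HasCompactSupport φ →
        tsupport φ ⊆ Ioi 0 ×ˢ Ioi 0 →
        ∫ p in (Ioi (0:ℝ) ×ˢ Ioi (0:ℝ)),
          (-(ux p.1 p.2) * (pt φ p + deriv f (u p.1 p.2) * px φ p)
            + (lam - 1) * deriv (deriv f) (u p.1 p.2) * (ux p.1 p.2) ^ 2 * φ p) = 0) ∧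
      (∀ K : Set (ℝ × ℝ), IsCompact K → K ⊆ Ici 0 ×ˢ Ici 0 →
        ∃ C : ℝ, ∀ p ∈ K, ∀ q ∈ K,
          |u p.1 p.2 - u q.1 q.2| ≤ C * (|p.1 - q.1| + |p.2 - q.2|) ^ (1 - lam)) := by
  obtain ⟨L, hL⟩ := hfLip
  obtain ⟨M, hM⟩ := hfbd
  rw [one_div] at hu₀W ⊢
  have hp : 2 ≤ lam⁻¹ := by simpa using inv_anti₀ hlam hlam'
  have hspeed : ContDiff ℝ 1 (deriv f) := hf.iterate_deriv' 1 1
  obtain ⟨F, hF⟩ := HunterSaxton.exists_lagrangianFlow hp (hspeed.differentiable one_ne_zero) hM hL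
    (fun b hb => (intervalIntegrable_iff_integrableOn_Icc_of_le hb.le).1 (hg₀int b hb)) hu₀W
  have hzero : ∀ t, 0 ≤ t → F.solution 0 t = 0 := fun t ht => F.solution_zero (mul_nonneg hf0 ht)
  have hweak := @F.setIntegral_weak_eq_zero
  have hholder := @F.exists_abs_solution_sub_le
  rw [inv_inv] at hweak hholder
  exact ⟨F.solution, F.gradient, F.continuous_solution.continuousOn, hzero,
    fun x hx => (hF x hx).trans (hu₀AC x hx).symm,
    fun t ht => ⟨fun b hb => F.intervalIntegrable_gradient hb.le t,
      fun x hx => by rw [F.integral_gradient hx, hzero t ht, sub_zero],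
      fun b _ => F.integrableOn_abs_gradient_rpow 0 b t⟩,
    fun φ hφ hφc hφs => hweak hφ hφc hφs, fun K hK _ => hholder hK⟩

/-- for `λ ∈ (0,1/3] ∪ {1/2}` there exists a weak solution of (E1)
`u_{tx} + f'(u) u_{xx} + λ f''(u) (u_x)² = 0` on `[0,∞) × [0,∞)` with the given
initial and boundary data which, in addition, is locally Hölder continuous with
exponent `1−λ` jointly in `(x,t)`: on every compact subset `K` of
`[0,∞) × [0,∞)` one has `|u(x₁,t₁) − u(x₂,t₂)| ≤ C (|x₁−x₂| + |t₁−t₂|)^{1−λ}`. -/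
theorem stmt1 (lam : ℝ) (hlam : (0 < lam ∧ lam ≤ 1/3) ∨ lam = 1/2)
    (f : ℝ → ℝ) (hf : ContDiff ℝ 2 f) (hf0 : 0 ≤ deriv f 0)
    (hfLip : ∃ L : ℝ, ∀ a b : ℝ, |deriv (deriv f) a - deriv (deriv f) b| ≤ L * |a - b|)
    (hfbd : ∃ M : ℝ, ∀ a : ℝ, |deriv (deriv f) a| ≤ M)
    (u₀ g₀ : ℝ → ℝ)
    (hu₀0 : u₀ 0 = 0)
    (hu₀'0 : HasDerivWithinAt u₀ 0 (Ici 0) 0)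
    (hg₀int : ∀ b : ℝ, 0 < b → IntervalIntegrable g₀ volume 0 b)
    (hu₀AC : ∀ x : ℝ, 0 ≤ x → u₀ x = ∫ y in (0:ℝ)..x, g₀ y)
    (hu₀W : ∀ b : ℝ, 0 < b → IntegrableOn (fun x => |g₀ x| ^ (1/lam)) (Icc 0 b)) :
    ∃ u ux : ℝ → ℝ → ℝ,
      -- continuity of the solution
      ContinuousOn (fun p : ℝ × ℝ => u p.1 p.2) (Ici 0 ×ˢ Ici 0) ∧
      -- boundary condition
      (∀ t : ℝ, 0 ≤ t → u 0 t = 0) ∧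
      -- initial condition
      (∀ x : ℝ, 0 ≤ x → u x 0 = u₀ x) ∧
      -- for each time, u(·,t) is locally absolutely continuous with derivative
      -- ux(·,t), and lies in W^{1,1/λ}_loc
      (∀ t : ℝ, 0 ≤ t →
        (∀ b : ℝ, 0 < b → IntervalIntegrable (fun y => ux y t) volume 0 b) ∧
        (∀ x : ℝ, 0 ≤ x → u x t = ∫ y in (0:ℝ)..x, ux y t) ∧
        (∀ b : ℝ, 0 < b → IntegrableOn (fun x => |ux x t| ^ (1/lam)) (Icc 0 b))) ∧
      -- the weak formulation of (E1)
      (∀ φ : ℝ × ℝ → ℝ, ContDiff ℝ 1 φ → HasCompactSupport φ →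
        tsupport φ ⊆ Ioi 0 ×ˢ Ioi 0 →
        ∫ p in (Ioi (0:ℝ) ×ˢ Ioi (0:ℝ)),
          (-(ux p.1 p.2) * (pt φ p + deriv f (u p.1 p.2) * px φ p)
            + (lam - 1) * deriv (deriv f) (u p.1 p.2) * (ux p.1 p.2) ^ 2 * φ p) = 0) ∧
      -- joint local Hölder continuity with exponent 1 − λ
      (∀ K : Set (ℝ × ℝ), IsCompact K → K ⊆ Ici 0 ×ˢ Ici 0 →
        ∃ C : ℝ, ∀ p ∈ K, ∀ q ∈ K,
          |u p.1 p.2 - u q.1 q.2| ≤ C * (|p.1 - q.1| + |p.2 - q.2|) ^ (1 - lam)) :=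
  stmt1_general lam (by rcases hlam with h | h <;> linarith)
    (by rcases hlam with h | h <;> linarith) f hf hf0 hfLip hfbd u₀ g₀ hg₀int hu₀AC hu₀W
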